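/- Let n ≥ 8 and let Γ be a finite index subgroup of Out(F_n) that contains the Torelli group 𝒯_n. Then any orientation preserving C^1 action of Γ on the circle cannot be faithful; that is, every group homomorphism Γ → Diff^1_+(S^1) has nontrivial kernel. -/

import Mathlib

noncomputable section

open MeasureTheory

/-- The circle `S¹ = ℝ/ℤ`. -/
abbrev 𝕊 : Type := AddCircle (1 : ℝ)

/-- `F : ℝ → ℝ` is a lift of the circle bijection `f` witnessing that `f` is an
orientation preserving homeomorphism of the circle: `F` is a strictly increasing
homeomorphism of `ℝ` (equivalently, continuous and strictly increasing) satisfying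
`F (x + 1) = F x + 1`, and projecting to `f`. -/
def IsOPLift (f : Equiv.Perm 𝕊) (F : ℝ → ℝ) : Prop :=
  Continuous F ∧ StrictMono F ∧ (∀ x : ℝ, F (x + 1) = F x + 1) ∧
    ∀ x : ℝ, f (x : 𝕊) = (F x : 𝕊)

/-- `f` is an orientation preserving homeomorphism of the circle. -/
def IsOPHomeo (f : Equiv.Perm 𝕊) : Prop := ∃ F : ℝ → ℝ, IsOPLift f F

/-- `F` is a lift witnessing that `f` is an orientation preserving `C¹` diffeomorphism
of the circle: an orientation preserving lift which is `C¹` with nowhere vanishing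
derivative. -/
def IsC1Lift (f : Equiv.Perm 𝕊) (F : ℝ → ℝ) : Prop :=
  IsOPLift f F ∧ ContDiff ℝ 1 F ∧ ∀ x : ℝ, deriv F x ≠ 0

/-- `f` is an orientation preserving `C¹` diffeomorphism of the circle, i.e. an element
of `Diff¹₊(S¹)`. -/
def IsC1Diffeo (f : Equiv.Perm 𝕊) : Prop := ∃ F : ℝ → ℝ, IsC1Lift f F

/-- The free group of rank `n`. -/
abbrev FreeGrp (n : ℕ) : Type := FreeGroup (Fin n)

/-- The automorphism group `Aut(Fₙ)`. -/
abbrev AutF (n : ℕ) : Type := MulAut (FreeGrp n)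

/-- The subgroup `IAₙ ≤ Aut(Fₙ)` of automorphisms acting trivially on the abelianization
`Fₙ^{ab} ≅ ℤⁿ`, i.e. the kernel of the natural map `Aut(Fₙ) → Aut(ℤⁿ)`. -/
def IA (n : ℕ) : Subgroup (AutF n) where
  carrier := {e | ∀ x : FreeGrp n, Abelianization.of (e x) = Abelianization.of x}
  one_mem' := fun _ => rfl
  mul_mem' := by
    intro a b ha hb x
    have h : (a * b) x = a (b x) := rfl
    rw [h, ha (b x), hb x]
  inv_mem' := by
    intro a ha x
    have h := ha (a⁻¹ x)
    have h' : a (a⁻¹ x) = x := a.apply_symm_apply x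
    rw [h'] at h
    exact h.symm

/-- The subgroup of inner automorphisms of `Fₙ`. -/
def InnF (n : ℕ) : Subgroup (AutF n) := (MulAut.conj : FreeGrp n →* AutF n).range

instance (n : ℕ) : (InnF n).Normal := by
  constructor
  rintro _ ⟨g, rfl⟩ e
  refine ⟨e g, ?_⟩
  ext x
  simp [MulAut.conj_apply, MulAut.mul_apply, MulAut.inv_def, map_mul, map_inv]

/-- The outer automorphism group `Out(Fₙ) = Aut(Fₙ)/Inn(Fₙ)`. -/
def OutF (n : ℕ) : Type := AutF n ⧸ InnF n

instance (n : ℕ) : Group (OutF n) := QuotientGroup.Quotient.group (InnF n)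

/-- The Torelli subgroup `𝒯ₙ ≤ Out(Fₙ)`: the subgroup of outer automorphisms acting
trivially on the abelianization `Fₙ^{ab} ≅ ℤⁿ`, i.e. the kernel of the induced map
`Out(Fₙ) → Aut(ℤⁿ)`.  Since inner automorphisms act trivially on the abelianization,
this kernel is exactly the image of `IAₙ` in `Out(Fₙ)`. -/
def Torelli (n : ℕ) : Subgroup (OutF n) :=
  (IA n).map (QuotientGroup.mk' (InnF n))

/-!
Suppose that the action is faithful. Two copies of `Aut(F₄)` on disjoint sets of letters meet `Γ` in
commuting groups of `C¹` circle diffeomorphisms. A group of lifts of such diffeomorphisms has either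
a point fixed by every element that possesses a fixed point, or an element with a hyperbolic fixed
point: two maps sending an interval into itself with disjoint images form an iterated function
system, some word of which contracts. A hyperbolic fixed point of one group is fixed by all the
elements of the commuting group that possess a fixed point, so for one of the two groups there is a
point fixed by every lift that possesses a fixed point.

On the lifts of that group translation numbers are additive. Hence there is a rotation character
`θ`, and all elements of `ker θ` have a lift fixing one and the same point. Relations between
partial conjugations, powers of transvections `x_a ↦ x_a x_b ^ N` and the automorphisms
`x_a ↦ x_a ⁅⁅x_b, x_c⁆, x_b⁆` show that `θ` has finite order on the group `L` which they generate,
and that every cocycle of `L` with values in a power of `θ` is a coboundary. By Shapiro's lemma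
`L ∩ ker θ` has no nontrivial homomorphism to `ℝ`, so Thurston's stability theorem makes it act
trivially. But it contains a power of a transvection of infinite order in `Out(Fₙ)`.
-/

open Set Filter Topology
open scoped commutatorElement

/-! ### Hyperbolic fixed points of commuting groups -/

section IteratedFunctionSystem

/-- The composition of the maps `f b` along a word in the alphabet `ι`; the last letter acts
first. -/
def wordMap {ι : Type*} (f : ι → ℝ → ℝ) : List ι → ℝ → ℝ
  | [] => id
  | b :: w => f b ∘ wordMap f w

/-- The length of the image of the interval `[a, c]` under the word map of `w`. -/
def imageLength {ι : Type*} (f : ι → ℝ → ℝ) (a c : ℝ) (w : List ι) : ℝ :=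
  wordMap f w c - wordMap f w a

/-- An upper bound for the oscillation on `[a, c]` of the logarithmic derivative of a word map,
valid as soon as each letter satisfies `|log f' x - log f' y| ≤ ε + C * |x - y|`. -/
def distortionBound {ι : Type*} (f : ι → ℝ → ℝ) (a c ε C : ℝ) : List ι → ℝ
  | [] => 0
  | _ :: w => distortionBound f a c ε C w + (ε + C * imageLength f a c w)

section Words

variable {ι : Type*} {f : ι → ℝ → ℝ} {a c : ℝ}

lemma wordMap_strictMono (hmono : ∀ b, StrictMono (f b)) : ∀ w, StrictMono (wordMap f w)
  | [] => strictMono_id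
  | b :: w => (hmono b).comp (wordMap_strictMono hmono w)

lemma wordMap_mapsTo (hmaps : ∀ b, MapsTo (f b) (Icc a c) (Icc a c)) :
    ∀ w, MapsTo (wordMap f w) (Icc a c) (Icc a c)
  | [] => mapsTo_id _
  | b :: w => (hmaps b).comp (wordMap_mapsTo hmaps w)

lemma wordMap_differentiable (hf : ∀ b, Differentiable ℝ (f b)) :
    ∀ w, Differentiable ℝ (wordMap f w)
  | [] => differentiable_id
  | b :: w => (hf b).comp (wordMap_differentiable hf w)

lemma deriv_wordMap_cons (hf : ∀ b, Differentiable ℝ (f b)) (b : ι) (w : List ι) (x : ℝ) :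
    deriv (wordMap f (b :: w)) x = deriv (f b) (wordMap f w x) * deriv (wordMap f w) x :=
  deriv_comp x (hf b _) (wordMap_differentiable hf w x)

lemma deriv_wordMap_pos (hf : ∀ b, Differentiable ℝ (f b)) (hpos : ∀ b x, 0 < deriv (f b) x) :
    ∀ w x, 0 < deriv (wordMap f w) x
  | [], x => by simp [wordMap]
  | b :: w, x => by
    rw [deriv_wordMap_cons hf]
    exact mul_pos (hpos b _) (deriv_wordMap_pos hf hpos w x)

lemma log_deriv_wordMap_sub_le {ε C : ℝ} (hC : 0 ≤ C) (hf : ∀ b, Differentiable ℝ (f b))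
    (hpos : ∀ b x, 0 < deriv (f b) x) (hmaps : ∀ b, MapsTo (f b) (Icc a c) (Icc a c))
    (hlog : ∀ b, ∀ x ∈ Icc a c, ∀ y ∈ Icc a c,
      |Real.log (deriv (f b) x) - Real.log (deriv (f b) y)| ≤ ε + C * |x - y|)
    {x y : ℝ} (hx : x ∈ Icc a c) (hy : y ∈ Icc a c) (w : List ι) :
    Real.log (deriv (wordMap f w) x) - Real.log (deriv (wordMap f w) y)
      ≤ distortionBound f a c ε C w := by
  induction w with
  | nil => simp [wordMap, distortionBound]
  | cons b w ih =>
    have hmono : Monotone (wordMap f w) :=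
      (wordMap_strictMono (fun b => strictMono_of_deriv_pos (hpos b)) w).monotone
    have hlength : |wordMap f w x - wordMap f w y| ≤ imageLength f a c w := by
      rw [abs_le, imageLength]
      constructor <;> linarith [hmono hx.1, hmono hx.2, hmono hy.1, hmono hy.2]
    have hletter := (le_abs_self _).trans <|
      hlog b _ (wordMap_mapsTo hmaps w hx) _ (wordMap_mapsTo hmaps w hy)
    simp only [deriv_wordMap_cons hf, distortionBound]
    rw [Real.log_mul (hpos b _).ne' (deriv_wordMap_pos hf hpos w x).ne',
      Real.log_mul (hpos b _).ne' (deriv_wordMap_pos hf hpos w y).ne']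
    linarith [mul_le_mul_of_nonneg_left hlength hC]

lemma log_deriv_wordMap_le {ε C : ℝ} (hC : 0 ≤ C) (hf : ∀ b, Differentiable ℝ (f b))
    (hpos : ∀ b x, 0 < deriv (f b) x) (hmaps : ∀ b, MapsTo (f b) (Icc a c) (Icc a c))
    (hlog : ∀ b, ∀ x ∈ Icc a c, ∀ y ∈ Icc a c,
      |Real.log (deriv (f b) x) - Real.log (deriv (f b) y)| ≤ ε + C * |x - y|)
    (hac : a < c) {x : ℝ} (hx : x ∈ Icc a c) (w : List ι) :
    Real.log (deriv (wordMap f w) x)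
      ≤ Real.log (imageLength f a c w / (c - a)) + distortionBound f a c ε C w := by
  have hdiff := wordMap_differentiable hf w
  obtain ⟨y, hy, hslope⟩ :=
    exists_deriv_eq_slope (wordMap f w) hac hdiff.continuous.continuousOn hdiff.differentiableOn
  rw [imageLength, ← hslope]
  linarith [log_deriv_wordMap_sub_le hC hf hpos hmaps hlog hx (Ioo_subset_Icc_self hy) w]

end Words

section BinaryWords

lemma sum_ofFn_succ (F : List Bool → ℝ) (N : ℕ) :
    ∑ w : Fin (N + 1) → Bool, F (List.ofFn w)
      = ∑ w : Fin N → Bool, (F (true :: List.ofFn w) + F (false :: List.ofFn w)) := by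
  rw [← (Fin.consEquiv fun _ => Bool).sum_comp, Fintype.sum_prod_type_right]
  simp [Fin.consEquiv, List.ofFn_succ]

variable {f : Bool → ℝ → ℝ} {a c : ℝ}

lemma sum_sub_wordMap_le (ha : ∀ b, a ≤ f b a) (hc : ∀ b, f b c ≤ c)
    (hgap : f true c ≤ f false a) (N : ℕ) {u : ℝ → ℝ} (hmono : ∀ b, Monotone (f b))
    (hu : Monotone u) :
    ∑ w : Fin N → Bool, (u (wordMap f (List.ofFn w) c) - u (wordMap f (List.ofFn w) a))
      ≤ u c - u a := by
  induction N generalizing u with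
  | zero => simp [wordMap]
  | succ N ih =>
    rw [sum_ofFn_succ (fun w => u (wordMap f w c) - u (wordMap f w a)), Finset.sum_add_distrib]
    have htrue := ih (hu.comp (hmono true))
    have hfalse := ih (hu.comp (hmono false))
    simp only [Function.comp_apply, wordMap] at htrue hfalse ⊢
    linarith [hu (ha true), hu (hc false), hu hgap]

lemma sum_imageLength_le (hmono : ∀ b, Monotone (f b)) (ha : ∀ b, a ≤ f b a)
    (hc : ∀ b, f b c ≤ c) (hgap : f true c ≤ f false a) (N : ℕ) :
    ∑ w : Fin N → Bool, imageLength f a c (List.ofFn w) ≤ c - a :=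
  sum_sub_wordMap_le ha hc hgap N hmono monotone_id

lemma sum_distortionBound_le {ε C : ℝ} (hC : 0 ≤ C)
    (hlength : ∀ N, ∑ w : Fin N → Bool, imageLength f a c (List.ofFn w) ≤ c - a) (N : ℕ) :
    ∑ w : Fin N → Bool, distortionBound f a c ε C (List.ofFn w)
      ≤ 2 ^ N * (N * ε) + (2 ^ N - 1) * (2 * C * (c - a)) := by
  induction N with
  | zero => simp [distortionBound]
  | succ N ih =>
    rw [sum_ofFn_succ]
    simp only [distortionBound, Finset.sum_add_distrib, ← Finset.mul_sum]
    simp only [Finset.sum_const, Finset.card_univ, Fintype.card_fun, Fintype.card_bool,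
      Fintype.card_fin, nsmul_eq_mul, Nat.cast_pow, Nat.cast_ofNat, Nat.cast_add, Nat.cast_one]
    linear_combination 2 * ih + 2 * mul_le_mul_of_nonneg_left (hlength N) hC

lemma sum_log_imageLength_le (hac : a < c) (hmono : ∀ b, StrictMono (f b)) (N : ℕ)
    (hlength : ∑ w : Fin N → Bool, imageLength f a c (List.ofFn w) ≤ c - a) :
    ∑ w : Fin N → Bool, Real.log (imageLength f a c (List.ofFn w) / (c - a))
      ≤ -(2 ^ N * (N * Real.log 2)) := by
  have hca : 0 < c - a := sub_pos.2 hac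
  have hlog (w : Fin N → Bool) : Real.log (imageLength f a c (List.ofFn w) / (c - a))
      ≤ 2 ^ N / (c - a) * imageLength f a c (List.ofFn w) - (1 + N * Real.log 2) := by
    have hpos : 0 < imageLength f a c (List.ofFn w) / (c - a) :=
      div_pos (sub_pos.2 (wordMap_strictMono hmono _ hac)) hca
    have := Real.log_le_sub_one_of_pos (mul_pos (pow_pos two_pos N) hpos)
    rw [Real.log_mul (pow_pos two_pos N).ne' hpos.ne', Real.log_pow] at this
    linear_combination this
  calc _ ≤ ∑ w : Fin N → Bool, (2 ^ N / (c - a) * imageLength f a c (List.ofFn w)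
            - (1 + N * Real.log 2)) := Finset.sum_le_sum fun w _ => hlog w
    _ = 2 ^ N / (c - a) * ∑ w : Fin N → Bool, imageLength f a c (List.ofFn w)
          - 2 ^ N * (1 + N * Real.log 2) := by
      simp [← Finset.mul_sum, mul_add]
    _ ≤ 2 ^ N / (c - a) * (c - a) - 2 ^ N * (1 + N * Real.log 2) := by gcongr
    _ = -(2 ^ N * (N * Real.log 2)) := by rw [div_mul_cancel₀ _ hca.ne']; ring

end BinaryWords

lemma exists_abs_sub_le_add_mul_dist_of_isCompact {X : Type*} [PseudoMetricSpace X] {K : Set X}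
    (hK : IsCompact K) {g : X → ℝ} (hg : ContinuousOn g K) {ε : ℝ} (hε : 0 < ε) :
    ∃ C, 0 ≤ C ∧ ∀ x ∈ K, ∀ y ∈ K, |g x - g y| ≤ ε + C * dist x y := by
  obtain ⟨δ, hδ, hclose⟩ :=
    Metric.uniformContinuousOn_iff.1 (hK.uniformContinuousOn_of_continuous hg) ε hε
  obtain ⟨B, hB⟩ := hK.exists_bound_of_continuousOn hg
  refine ⟨2 * |B| / δ, by positivity, fun x hx y hy => ?_⟩
  rcases lt_or_ge (dist x y) δ with hxy | hxy
  · have hCxy : 0 ≤ 2 * |B| / δ * dist x y := by positivity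
    linarith [hclose x hx y hy hxy, Real.dist_eq (g x) (g y)]
  · have hgx := (hB x hx).trans (le_abs_self B)
    have hgy := (hB y hy).trans (le_abs_self B)
    calc |g x - g y| ≤ |g x| + |g y| := abs_sub _ _
      _ ≤ 2 * |B| / δ * δ := by
        rw [div_mul_cancel₀ _ hδ.ne']
        linarith [Real.norm_eq_abs (g x), Real.norm_eq_abs (g y)]
      _ ≤ 2 * |B| / δ * dist x y := by gcongr
      _ ≤ ε + 2 * |B| / δ * dist x y := by linarith

lemma exists_log_deriv_sub_le {ι : Type*} [Finite ι] {f : ι → ℝ → ℝ}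
    (hf : ∀ b, ContDiff ℝ 1 (f b)) (hpos : ∀ b x, 0 < deriv (f b) x) (a c : ℝ) {ε : ℝ}
    (hε : 0 < ε) :
    ∃ C, 0 ≤ C ∧ ∀ b, ∀ x ∈ Icc a c, ∀ y ∈ Icc a c,
      |Real.log (deriv (f b) x) - Real.log (deriv (f b) y)| ≤ ε + C * |x - y| := by
  have hcont (b : ι) : ContinuousOn (fun x => Real.log (deriv (f b) x)) (Icc a c) :=
    (((hf b).continuous_deriv le_rfl).log fun x => (hpos b x).ne').continuousOn
  cases nonempty_fintype ι
  choose C hC hlog using fun b =>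
    exists_abs_sub_le_add_mul_dist_of_isCompact isCompact_Icc (hcont b) hε
  refine ⟨∑ b, C b, Finset.sum_nonneg fun b _ => hC b, fun b x hx y hy => ?_⟩
  have hCb : C b ≤ ∑ b, C b := Finset.single_le_sum (fun i _ => hC i) (Finset.mem_univ b)
  exact (hlog b x hx y hy).trans (by rw [Real.dist_eq]; gcongr)

/- There are `2 ^ N` words of length `N` with disjoint images, so their logarithmic lengths are on
average at most `-N log 2`; this beats the average distortion, which is at most `N ε + O(1)`. -/
lemma exists_wordMap_deriv_lt_one {f : Bool → ℝ → ℝ} {a c : ℝ} (hac : a < c)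
    (hf : ∀ b, ContDiff ℝ 1 (f b)) (hpos : ∀ b x, 0 < deriv (f b) x)
    (ha : ∀ b, a ≤ f b a) (hc : ∀ b, f b c ≤ c) (hgap : f true c ≤ f false a) :
    ∃ w, ∀ x ∈ Icc a c, deriv (wordMap f w) x < 1 := by
  have hdiff (b : Bool) : Differentiable ℝ (f b) := (hf b).differentiable one_ne_zero
  have hmono (b : Bool) : StrictMono (f b) := strictMono_of_deriv_pos (hpos b)
  have hmaps (b : Bool) : MapsTo (f b) (Icc a c) (Icc a c) := fun x hx =>
    ⟨(ha b).trans ((hmono b).monotone hx.1), ((hmono b).monotone hx.2).trans (hc b)⟩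
  have hlog2 : 0 < Real.log 2 := Real.log_pos one_lt_two
  obtain ⟨C, hC, hlog⟩ := exists_log_deriv_sub_le hf hpos a c (half_pos hlog2)
  obtain ⟨N, hN⟩ := exists_nat_gt (2 * C * (c - a) / (Real.log 2 / 2))
  rw [div_lt_iff₀ (half_pos hlog2)] at hN
  have hlength := sum_imageLength_le (fun b => (hmono b).monotone) ha hc hgap
  have hsum : ∑ w : Fin N → Bool, (Real.log (imageLength f a c (List.ofFn w) / (c - a))
      + distortionBound f a c (Real.log 2 / 2) C (List.ofFn w)) < ∑ w : Fin N → Bool, 0 := by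
    rw [Finset.sum_add_distrib, Finset.sum_const_zero]
    have hpow : (0 : ℝ) < 2 ^ N := by positivity
    have hCca : 0 ≤ 2 * C * (c - a) := by have := sub_pos.2 hac; positivity
    linarith [sum_log_imageLength_le hac hmono N (hlength N),
      sum_distortionBound_le (ε := Real.log 2 / 2) hC hlength N, mul_lt_mul_of_pos_left hN hpow]
  obtain ⟨w, -, hw⟩ := Finset.exists_lt_of_sum_lt hsum
  refine ⟨List.ofFn w, fun x hx => ?_⟩
  rw [← Real.log_neg_iff (deriv_wordMap_pos hdiff hpos _ x)]
  exact (log_deriv_wordMap_le hC hdiff hpos hmaps hlog hac hx _).trans_lt hw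

theorem exists_wordMap_hyperbolic_fixedPoint {f : Bool → ℝ → ℝ} {a c : ℝ} (hac : a < c)
    (hf : ∀ b, ContDiff ℝ 1 (f b)) (hpos : ∀ b x, 0 < deriv (f b) x)
    (ha : ∀ b, a ≤ f b a) (hc : ∀ b, f b c ≤ c) (hgap : f true c ≤ f false a) :
    ∃ w x, wordMap f w x = x ∧ deriv (wordMap f w) x < 1 := by
  obtain ⟨w, hw⟩ := exists_wordMap_deriv_lt_one hac hf hpos ha hc hgap
  have hcont : Continuous (wordMap f w) :=
    (wordMap_differentiable (fun b => (hf b).differentiable one_ne_zero) w).continuous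
  have hmaps : MapsTo (wordMap f w) (Icc a c) (Icc a c) :=
    wordMap_mapsTo (fun b x hx =>
      have hmono := (strictMono_of_deriv_pos (hpos b)).monotone
      ⟨(ha b).trans (hmono hx.1), (hmono hx.2).trans (hc b)⟩) w
  obtain ⟨x, hx, hfix⟩ := exists_mem_Icc_isFixedPt_of_mapsTo hcont.continuousOn hac.le hmaps
  exact ⟨w, x, hfix, hw x hx⟩

end IteratedFunctionSystem

section Dichotomy

/-- The lifts to `ℝ` of the orientation preserving `C¹` diffeomorphisms of the circle. -/
def contDiffLifts : Subgroup CircleDeg1Liftˣ where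
  carrier := {f | ContDiff ℝ 1 f ∧ ContDiff ℝ 1 (f⁻¹ : CircleDeg1Liftˣ)}
  one_mem' := ⟨contDiff_id, contDiff_id⟩
  mul_mem' {f g} hf hg := by
    refine ⟨hf.1.comp hg.1, ?_⟩
    rw [mul_inv_rev]
    exact hg.2.comp hf.2
  inv_mem' {f} hf := ⟨hf.2, by rw [inv_inv]; exact hf.1⟩

/-- The points fixed by every element of `G`. -/
def commonFixedPoints (G : Subgroup CircleDeg1Liftˣ) : Set ℝ := {x | ∀ g ∈ G, g x = x}

/-- The point `x` is fixed by every element of `G` that possesses a fixed point. -/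
def IsSharedFixedPoint (G : Subgroup CircleDeg1Liftˣ) (x : ℝ) : Prop :=
  ∀ g ∈ G, (∃ y, g y = y) → g x = x

lemma lift_strictMono (f : CircleDeg1Liftˣ) : StrictMono f :=
  (CircleDeg1Lift.toOrderIso f).strictMono

lemma lift_continuous (f : CircleDeg1Liftˣ) : Continuous f :=
  (CircleDeg1Lift.toOrderIso f).continuous

lemma lift_add_intCast_eq {f : CircleDeg1Lift} {x : ℝ} (hx : f x = x) (k : ℤ) :
    f (x + k) = x + k := by
  rw [f.map_add_int, hx]

lemma exists_fixedPoint_mem_Ico {f : CircleDeg1Lift} {y : ℝ} (hy : f y = y) (x : ℝ) :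
    ∃ z ∈ Ico x (x + 1), f z = z := by
  refine ⟨y + (⌈x - y⌉ : ℤ), ⟨?_, ?_⟩, lift_add_intCast_eq hy _⟩
  · linarith [Int.le_ceil (x - y)]
  · linarith [Int.ceil_lt_add_one (x - y)]

lemma lift_deriv_pos {f : CircleDeg1Liftˣ} (hf : f ∈ contDiffLifts) (x : ℝ) :
    0 < deriv f x := by
  have hcomp : deriv (f⁻¹ : CircleDeg1Liftˣ) (f x) * deriv f x = 1 := by
    rw [← deriv_comp x (hf.2.differentiable one_ne_zero _) (hf.1.differentiable one_ne_zero x)]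
    have : ((f⁻¹ : CircleDeg1Liftˣ) : ℝ → ℝ) ∘ f = id :=
      funext (CircleDeg1Lift.units_inv_apply_apply f)
    rw [this, deriv_id]
  exact (lift_strictMono f).monotone.deriv_nonneg.lt_of_ne
    (right_ne_zero_of_mul_eq_one hcomp).symm

section CommonFixedPoints

variable {G : Subgroup CircleDeg1Liftˣ}

lemma isClosed_commonFixedPoints : IsClosed (commonFixedPoints G) := by
  simp only [commonFixedPoints, ofPred_forall]
  exact isClosed_biInter fun g _ => isClosed_eq (lift_continuous g) continuous_id

lemma add_intCast_mem_commonFixedPoints {x : ℝ} (hx : x ∈ commonFixedPoints G) (k : ℤ) :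
    x + k ∈ commonFixedPoints G := fun g hg => lift_add_intCast_eq (hx g hg) k

lemma mem_commonFixedPoints_closure {S : Set CircleDeg1Liftˣ} {x : ℝ} (h : ∀ g ∈ S, g x = x) :
    x ∈ commonFixedPoints (Subgroup.closure S) := by
  intro g hg
  induction hg using Subgroup.closure_induction with
  | mem g hg => exact h g hg
  | one => rfl
  | mul g g' _ _ hg hg' => rw [Units.val_mul, CircleDeg1Lift.mul_apply, hg', hg]
  | inv g _ hg => conv_lhs => rw [← hg, CircleDeg1Lift.units_inv_apply_apply]

lemma image_orbit_eq {g : CircleDeg1Liftˣ} (hg : g ∈ G) (x : ℝ) :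
    g '' ((fun h : CircleDeg1Liftˣ => h x) '' G) = (fun h : CircleDeg1Liftˣ => h x) '' G := by
  ext y
  simp only [mem_image, SetLike.mem_coe, exists_exists_and_eq_and]
  constructor
  · rintro ⟨h, hh, rfl⟩
    exact ⟨g * h, mul_mem hg hh, rfl⟩
  · rintro ⟨h, hh, rfl⟩
    exact ⟨g⁻¹ * h, mul_mem (inv_mem hg) hh, CircleDeg1Lift.units_apply_inv_apply g _⟩

lemma sInf_orbit_mem_commonFixedPoints {x : ℝ}
    (hbdd : BddBelow ((fun h : CircleDeg1Liftˣ => h x) '' (G : Set CircleDeg1Liftˣ))) :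
    sInf ((fun h : CircleDeg1Liftˣ => h x) '' (G : Set CircleDeg1Liftˣ)) ∈ commonFixedPoints G := by
  intro g hg
  have := (CircleDeg1Lift.toOrderIso g).map_csInf' ⟨x, mem_image_of_mem _ G.one_mem⟩ hbdd
  rwa [CircleDeg1Lift.coe_toOrderIso, image_orbit_eq hg] at this

lemma sSup_orbit_mem_commonFixedPoints {x : ℝ}
    (hbdd : BddAbove ((fun h : CircleDeg1Liftˣ => h x) '' (G : Set CircleDeg1Liftˣ))) :
    sSup ((fun h : CircleDeg1Liftˣ => h x) '' (G : Set CircleDeg1Liftˣ)) ∈ commonFixedPoints G := by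
  intro g hg
  have := (CircleDeg1Lift.toOrderIso g).map_csSup' ⟨x, mem_image_of_mem _ G.one_mem⟩ hbdd
  rwa [CircleDeg1Lift.coe_toOrderIso, image_orbit_eq hg] at this

lemma exists_mem_apply_lt {a c m : ℝ} (ham : a < m)
    (hgap : ∀ x ∈ commonFixedPoints G, x ≤ c → x ≤ a) : ∃ g ∈ G, g c < m := by
  by_contra! hge
  have hbound : m ∈ lowerBounds ((fun h : CircleDeg1Liftˣ => h c) '' (G : Set CircleDeg1Liftˣ)) :=
    forall_mem_image.2 hge
  have hmem : c ∈ (fun h : CircleDeg1Liftˣ => h c) '' (G : Set CircleDeg1Liftˣ) :=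
    mem_image_of_mem _ G.one_mem
  have hle := hgap _ (sInf_orbit_mem_commonFixedPoints ⟨m, hbound⟩) (csInf_le ⟨m, hbound⟩ hmem)
  exact (ham.trans_le (le_csInf ⟨c, hmem⟩ hbound)).not_ge hle

lemma exists_mem_lt_apply {a c m : ℝ} (hmc : m < c)
    (hgap : ∀ x ∈ commonFixedPoints G, a ≤ x → c ≤ x) : ∃ g ∈ G, m < g a := by
  by_contra! hle
  have hbound : m ∈ upperBounds ((fun h : CircleDeg1Liftˣ => h a) '' (G : Set CircleDeg1Liftˣ)) :=
    forall_mem_image.2 hle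
  have hmem : a ∈ (fun h : CircleDeg1Liftˣ => h a) '' (G : Set CircleDeg1Liftˣ) :=
    mem_image_of_mem _ G.one_mem
  have hge := hgap _ (sSup_orbit_mem_commonFixedPoints ⟨m, hbound⟩) (le_csSup ⟨m, hbound⟩ hmem)
  exact ((csSup_le ⟨a, hmem⟩ hbound).trans_lt hmc).not_ge hge

end CommonFixedPoints

lemma exists_gap {S T : Set ℝ} (hS : IsClosed S) (hT : IsClosed T) (hST : Disjoint S T)
    {s t : ℝ} (hs : s ∈ S) (ht : t ∈ T) (hst : s ≤ t) :
    ∃ a ∈ S, ∃ c ∈ T, a < c ∧ (∀ x ∈ S, x ≤ c → x ≤ a) ∧ ∀ x ∈ T, a ≤ x → c ≤ x := by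
  have hTbdd : BddBelow (T ∩ Ici s) := ⟨s, fun x hx => hx.2⟩
  set c := sInf (T ∩ Ici s)
  obtain ⟨hcT, hsc⟩ : c ∈ T ∩ Ici s := (hT.inter isClosed_Ici).csInf_mem ⟨t, ht, hst⟩ hTbdd
  have hSbdd : BddAbove (S ∩ Iic c) := ⟨c, fun x hx => hx.2⟩
  set a := sSup (S ∩ Iic c)
  obtain ⟨haS, hac⟩ : a ∈ S ∩ Iic c := (hS.inter isClosed_Iic).csSup_mem ⟨s, hs, hsc⟩ hSbdd
  have hsa : s ≤ a := le_csSup hSbdd ⟨hs, hsc⟩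
  exact ⟨a, haS, c, hcT, hac.lt_of_ne (hST.ne_of_mem haS hcT),
    fun x hx hxc => le_csSup hSbdd ⟨hx, hxc⟩,
    fun x hx hax => csInf_le hTbdd ⟨hx, hsa.trans hax⟩⟩

lemma wordMap_lift {ι : Type*} (f : ι → CircleDeg1Liftˣ) (w : List ι) :
    wordMap (fun b => f b) w = (w.map f).prod := by
  induction w with
  | nil => rfl
  | cons b w ih => rw [wordMap, ih]; rfl

theorem exists_hyperbolic_of_disjoint_commonFixedPoints {G H : Subgroup CircleDeg1Liftˣ}
    (hG : G ≤ contDiffLifts) (hH : H ≤ contDiffLifts)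
    (hGne : (commonFixedPoints G).Nonempty) (hHne : (commonFixedPoints H).Nonempty)
    (hdisj : Disjoint (commonFixedPoints G) (commonFixedPoints H)) :
    ∃ w ∈ G ⊔ H, ∃ x, w x = x ∧ deriv w x < 1 := by
  obtain ⟨s, hs⟩ := hGne
  obtain ⟨t, ht⟩ := hHne
  obtain ⟨a, haG, c, hcH, hac, hgapG, hgapH⟩ :=
    exists_gap isClosed_commonFixedPoints isClosed_commonFixedPoints hdisj hs
      (add_intCast_mem_commonFixedPoints ht ⌈s - t⌉) (by linarith [Int.le_ceil (s - t)])
  obtain ⟨u, hu, huc⟩ := exists_mem_apply_lt (m := (a + c) / 2) (by linarith) hgapG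
  obtain ⟨v, hv, hva⟩ := exists_mem_lt_apply (m := (a + c) / 2) (by linarith) hgapH
  let f : Bool → CircleDeg1Liftˣ := fun b => bif b then u else v
  have hf (b : Bool) : f b ∈ G ⊔ H := by
    cases b
    exacts [le_sup_right (a := G) hv, le_sup_left (b := H) hu]
  have hfC1 (b : Bool) : f b ∈ contDiffLifts := sup_le hG hH (hf b)
  obtain ⟨w, x, hwx, hderiv⟩ := exists_wordMap_hyperbolic_fixedPoint (f := fun b => f b) hac
    (fun b => (hfC1 b).1) (fun b => lift_deriv_pos (hfC1 b))
    (Bool.forall_bool.2 ⟨show a ≤ v a by linarith, (haG u hu).ge⟩)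
    (Bool.forall_bool.2 ⟨(hcH v hv).le, show u c ≤ c by linarith⟩)
    (huc.trans hva).le
  rw [wordMap_lift] at hwx hderiv
  exact ⟨(w.map f).prod, list_prod_mem (List.forall_mem_map.2 fun b _ => hf b), x, hwx, hderiv⟩

lemma exists_fixedPoint_of_finset {G : Subgroup CircleDeg1Liftˣ} (hG : G ≤ contDiffLifts)
    (hnonhyp : ∀ w ∈ G, ∀ x, w x = x → 1 ≤ deriv w x) (t : Finset CircleDeg1Liftˣ)
    (ht : ∀ g ∈ t, g ∈ G ∧ ∃ y, g y = y) : ∃ x, ∀ g ∈ t, g x = x := by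
  classical
  induction t using Finset.induction_on with
  | empty => simp
  | insert h t _ ih =>
    rw [Finset.forall_mem_insert] at ht
    obtain ⟨⟨hhG, y, hy⟩, ht⟩ := ht
    obtain ⟨x, hx⟩ := ih ht
    have hclosure : Subgroup.closure (t : Set CircleDeg1Liftˣ) ≤ G :=
      (Subgroup.closure_le G).2 fun g hg => (ht g hg).1
    have hclosure' : Subgroup.closure {h} ≤ G :=
      (Subgroup.closure_le G).2 (singleton_subset_iff.2 hhG)
    by_contra! hno
    obtain ⟨w, hw, z, hz, hderiv⟩ := exists_hyperbolic_of_disjoint_commonFixedPoints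
      (hclosure.trans hG) (hclosure'.trans hG) ⟨x, mem_commonFixedPoints_closure hx⟩
      ⟨y, mem_commonFixedPoints_closure (by simpa using hy)⟩
      (Set.disjoint_left.2 fun z hzt hzh => by
        obtain ⟨g, hg, hgz⟩ := hno z
        rcases Finset.mem_insert.1 hg with rfl | hg
        · exact hgz (hzh _ (Subgroup.mem_closure_singleton_self g))
        · exact hgz (hzt _ (Subgroup.subset_closure hg)))
    exact hderiv.not_ge (hnonhyp w (sup_le hclosure hclosure' hw) z hz)

theorem exists_isSharedFixedPoint_or_hyperbolic {G : Subgroup CircleDeg1Liftˣ}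
    (hG : G ≤ contDiffLifts) :
    (∃ x, IsSharedFixedPoint G x) ∨ ∃ w ∈ G, ∃ x, w x = x ∧ deriv w x < 1 := by
  by_contra! ⟨hno, hnonhyp⟩
  let ι := {g : CircleDeg1Liftˣ // g ∈ G ∧ ∃ y, g y = y}
  obtain ⟨t, ht⟩ := (isCompact_Icc (a := (0 : ℝ)) (b := 1)).elim_finite_subfamily_closed
    (fun g : ι => {x | g.1 x = x}) (fun g => isClosed_eq (lift_continuous g.1) continuous_id) <| by
      refine eq_empty_of_forall_notMem fun x hx => ?_
      exact hno x fun g hg hy => mem_iInter.1 hx.2 ⟨g, hg, hy⟩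
  obtain ⟨x, hx⟩ := exists_fixedPoint_of_finset hG hnonhyp (t.map (.subtype _)) <| by
    simp +contextual
  refine eq_empty_iff_forall_notMem.1 ht (Int.fract x)
    ⟨⟨Int.fract_nonneg x, (Int.fract_lt_one x).le⟩, mem_iInter₂.2 fun g hg => ?_⟩
  have hgx : g.1 x = x := hx g.1 (Finset.mem_map_of_mem _ hg)
  simpa [Int.fract, sub_eq_add_neg] using lift_add_intCast_eq hgx (-⌊x⌋)

lemma eq_zero_of_apply_eq_add_intCast {f : CircleDeg1Lift} {x z : ℝ} {k : ℤ} (hx : f x = x)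
    (hz : f z = z + k) : k = 0 := by
  have hzero := f.translationNumber_of_eq_add_int (m := 0) (by simpa using hx)
  have hk := f.translationNumber_of_eq_add_int hz
  exact_mod_cast hk.symm.trans hzero

lemma deriv_eq_one_of_tendsto_fixedPoints {f : ℝ → ℝ} {L : ℝ} {u : ℕ → ℝ}
    (hf : DifferentiableAt ℝ f L) (hu : Tendsto u atTop (𝓝 L)) (hne : ∀ n, u n ≠ L)
    (hfix : ∀ n, f (u n) = u n) : deriv f L = 1 := by
  have hfL : f L = L :=
    tendsto_nhds_unique (hf.continuousAt.tendsto.comp hu) (hu.congr fun n => (hfix n).symm)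
  have hslope := (hasDerivAt_iff_tendsto_slope.1 hf.hasDerivAt).comp
    (tendsto_nhdsWithin_iff.2 ⟨hu, .of_forall hne⟩)
  refine tendsto_nhds_unique hslope (tendsto_const_nhds.congr fun n => ?_)
  rw [Function.comp_apply, slope_def_field, hfix, hfL, div_self (sub_ne_zero.2 (hne n))]

lemma deriv_apply_eq_of_commute {w h : CircleDeg1Liftˣ} (hw : w ∈ contDiffLifts)
    (hh : h ∈ contDiffLifts) (hcomm : Commute w h) {x : ℝ} (hx : w x = x) :
    deriv w (h x) = deriv w x := by
  have hcomp : (w : ℝ → ℝ) ∘ h = h ∘ w := congrArg (fun f : CircleDeg1Liftˣ => (f : ℝ → ℝ)) hcomm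
  have hderiv := congrArg (fun f => deriv f x) hcomp
  rw [deriv_comp x (hw.1.differentiable one_ne_zero _) (hh.1.differentiable one_ne_zero _),
    deriv_comp x (hh.1.differentiable one_ne_zero _) (hw.1.differentiable one_ne_zero _), hx,
    mul_comm] at hderiv
  exact mul_left_cancel₀ (lift_deriv_pos hh x).ne' hderiv

lemma apply_apply_eq_of_commute {w h : CircleDeg1Liftˣ} (hcomm : Commute w h) {x : ℝ}
    (hx : w x = x) : w (h x) = h x := by
  have := congrArg (fun f : CircleDeg1Liftˣ => f x) hcomm
  simpa only [Units.val_mul, CircleDeg1Lift.mul_apply, hx] using this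

/- Otherwise `h ^ n x` increases to a limit `L` at which the derivative of `w` is both `1`, because
the points `h ^ n x` are fixed by `w`, and equal to `w' x`, because `w` commutes with `h`. -/
lemma apply_le_of_commute_hyperbolic {w h : CircleDeg1Liftˣ} (hw : w ∈ contDiffLifts)
    (hh : h ∈ contDiffLifts) (hcomm : Commute w h) {x y : ℝ} (hx : w x = x)
    (hderiv : deriv w x < 1) (hy : h y = y) : h x ≤ x := by
  by_contra! hlt
  have hmono : StrictMono fun n => (h ^ n : CircleDeg1Liftˣ) x := strictMono_nat_of_lt_succ
    fun n => by
      rw [pow_succ, Units.val_mul]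
      exact lift_strictMono (h ^ n) hlt
  obtain ⟨z, ⟨hxz, -⟩, hz⟩ := exists_fixedPoint_mem_Ico hy x
  have hbdd : BddAbove (range fun n => (h ^ n : CircleDeg1Liftˣ) x) := by
    refine ⟨z, forall_mem_range.2 fun n => ?_⟩
    have hzn : (h ^ n : CircleDeg1Liftˣ) z = z :=
      mem_commonFixedPoints_closure (S := {h}) (by simpa using hz) _
        (pow_mem (Subgroup.mem_closure_singleton_self h) n)
    exact hzn ▸ (lift_strictMono (h ^ n)).monotone hxz
  have hlim := tendsto_atTop_ciSup hmono.monotone hbdd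
  have hlim_one := deriv_eq_one_of_tendsto_fixedPoints (hw.1.differentiable one_ne_zero _) hlim
    (fun n => (hmono n.lt_succ_self).trans_le (le_ciSup hbdd _) |>.ne)
    (fun n => apply_apply_eq_of_commute (hcomm.pow_right n) hx)
  have hlim_deriv := ((hw.1.continuous_deriv le_rfl).tendsto _).comp hlim
  refine hderiv.ne (hlim_one ▸
    tendsto_nhds_unique (tendsto_const_nhds.congr fun n => ?_) hlim_deriv)
  exact (deriv_apply_eq_of_commute hw (pow_mem hh n) (hcomm.pow_right n) hx).symm

/- A hyperbolic fixed point of an element of `G` is fixed by all the elements of `H` that possess a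
fixed point. -/
theorem exists_isSharedFixedPoint_of_commute {G H : Subgroup CircleDeg1Liftˣ}
    (hG : G ≤ contDiffLifts) (hH : H ≤ contDiffLifts)
    (hcomm : ∀ g ∈ G, ∀ h ∈ H, ∃ k : ℤ, ∀ x, g (h x) = h (g x) + k) :
    (∃ x, IsSharedFixedPoint G x) ∨ ∃ x, IsSharedFixedPoint H x := by
  refine (exists_isSharedFixedPoint_or_hyperbolic hG).imp_right ?_
  rintro ⟨w, hw, x, hx, hderiv⟩
  refine ⟨x, fun h hh ⟨y, hy⟩ => ?_⟩
  have hcomm_w : Commute w h := by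
    obtain ⟨k, hk⟩ := hcomm w hw h hh
    have hkx := hk x
    rw [hx] at hkx
    obtain rfl := eq_zero_of_apply_eq_add_intCast hx hkx
    exact Units.ext (CircleDeg1Lift.ext fun z => by simpa using hk z)
  have hy_inv : (h⁻¹ : CircleDeg1Liftˣ) y = y := by
    conv_lhs => rw [← hy, CircleDeg1Lift.units_inv_apply_apply]
  refine le_antisymm
    (apply_le_of_commute_hyperbolic (hG hw) (hH hh) hcomm_w hx hderiv hy) ?_
  have hle := apply_le_of_commute_hyperbolic (hG hw) (inv_mem (hH hh)) hcomm_w.inv_right hx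
    hderiv hy_inv
  simpa only [CircleDeg1Lift.units_apply_inv_apply] using (lift_strictMono h).monotone hle

end Dichotomy

/-! ### Rotation characters and Thurston stability -/

section TranslationNumber

open CircleDeg1Lift (translationNumber)

/-- The preorder on lifts comparing their values along the orbit of `x` under `G`. It is invariant
under left multiplication, and under right multiplication by elements of `G`. -/
def OrbitLE (G : Subgroup CircleDeg1Liftˣ) (x : ℝ) (f g : CircleDeg1Liftˣ) : Prop :=
  ∀ k ∈ G, f (k x) ≤ g (k x)

section OrbitLE

variable {G : Subgroup CircleDeg1Liftˣ} {x : ℝ} {f g h k : CircleDeg1Liftˣ}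

lemma orbitLE_refl : OrbitLE G x f f := fun _ _ => le_rfl

lemma orbitLE_trans (hfg : OrbitLE G x f g) (hgh : OrbitLE G x g h) : OrbitLE G x f h :=
  fun k hk => (hfg k hk).trans (hgh k hk)

lemma orbitLE_mul_left (h : CircleDeg1Liftˣ) (hfg : OrbitLE G x f g) :
    OrbitLE G x (h * f) (h * g) :=
  fun k hk => (lift_strictMono h).monotone (hfg k hk)

lemma orbitLE_mul_right (hk : k ∈ G) (hfg : OrbitLE G x f g) : OrbitLE G x (f * k) (g * k) :=
  fun l hl => hfg (k * l) (mul_mem hk hl)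

lemma orbitLE_pow_mul (hg : g ∈ G) (hle : OrbitLE G x (g * f) (f * g)) (n : ℕ) :
    OrbitLE G x (g ^ n * f) (f * g ^ n) := by
  induction n with
  | zero => simpa using orbitLE_refl
  | succ n ih =>
    have hleft := orbitLE_mul_left (g ^ n) hle
    have hright := orbitLE_mul_right hg ih
    rw [← mul_assoc] at hleft
    rw [pow_succ, mul_assoc, ← mul_assoc f]
    exact orbitLE_trans hleft (by simpa only [mul_assoc] using hright)

lemma orbitLE_mul_pow (hf : f ∈ G) (hg : g ∈ G) (hle : OrbitLE G x (g * f) (f * g)) (n : ℕ) :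
    OrbitLE G x ((f * g) ^ n) (f ^ n * g ^ n) := by
  induction n with
  | zero => simpa using orbitLE_refl
  | succ n ih =>
    have hswap := orbitLE_mul_right hg (orbitLE_mul_left (f ^ n) (orbitLE_pow_mul hg hle n))
    have hpow := orbitLE_mul_right (mul_mem hf hg) ih
    simp only [pow_succ, mul_assoc] at hswap hpow ⊢
    exact orbitLE_trans hpow hswap

lemma orbitLE_pow_mul_pow (hf : f ∈ G) (hg : g ∈ G) (hle : OrbitLE G x (g * f) (f * g)) (n : ℕ) :
    OrbitLE G x (g ^ n * f ^ n) ((f * g) ^ n) := by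
  induction n with
  | zero => simpa using orbitLE_refl
  | succ n ih =>
    have hswap := orbitLE_mul_right (pow_mem hf n) (orbitLE_pow_mul hg hle (n + 1))
    have hpow := orbitLE_mul_left (f * g) ih
    rw [pow_succ' f, pow_succ' (f * g), ← mul_assoc]
    refine orbitLE_trans hswap ?_
    rw [pow_succ' g]
    simpa only [mul_assoc] using hpow

end OrbitLE

variable {G : Subgroup CircleDeg1Liftˣ} {x : ℝ}

lemma add_translationNumber_sub_one_lt (f : CircleDeg1Lift) (x : ℝ) :
    x + translationNumber f - 1 < f x := by
  linarith [f.translationNumber_le_ceil_sub x, Int.ceil_lt_add_one (f x - x)]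

lemma nonpos_of_forall_nat_mul_lt {t C : ℝ} (h : ∀ n : ℕ, n * t < C) : t ≤ 0 := by
  by_contra! ht
  obtain ⟨n, hn⟩ := exists_nat_gt (C / t)
  exact ((div_lt_iff₀ ht).1 hn).not_gt (h n)

lemma translationNumber_mul_of_orbitLE {f g : CircleDeg1Liftˣ} (hf : f ∈ G) (hg : g ∈ G)
    (hle : OrbitLE G x (g * f) (f * g)) :
    translationNumber (f * g) = translationNumber f + translationNumber g := by
  refine le_antisymm (sub_nonpos.1 <| nonpos_of_forall_nat_mul_lt (C := 3) fun n => ?_)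
    (sub_nonpos.1 <| nonpos_of_forall_nat_mul_lt (C := 3) fun n => ?_)
  · have hpow : ((f.val * g.val) ^ n) x ≤ (f.val ^ n) ((g.val ^ n) x) :=
      orbitLE_mul_pow hf hg hle n 1 G.one_mem
    have hfg := add_translationNumber_sub_one_lt ((f.val * g.val) ^ n) x
    have hfn := (f.val ^ n).map_lt_add_translationNumber_add_one ((g.val ^ n) x)
    have hgn := (g.val ^ n).map_lt_add_translationNumber_add_one x
    simp only [CircleDeg1Lift.translationNumber_pow] at hfg hfn hgn
    linarith
  · have hpow : (g.val ^ n) ((f.val ^ n) x) ≤ ((f.val * g.val) ^ n) x :=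
      orbitLE_pow_mul_pow hf hg hle n 1 G.one_mem
    have hfg := ((f.val * g.val) ^ n).map_lt_add_translationNumber_add_one x
    have hgn := add_translationNumber_sub_one_lt (g.val ^ n) ((f.val ^ n) x)
    have hfn := add_translationNumber_sub_one_lt (f.val ^ n) x
    simp only [CircleDeg1Lift.translationNumber_pow] at hfg hfn hgn
    linarith

lemma orbitLE_one_total (hx : IsSharedFixedPoint G x) {g : CircleDeg1Liftˣ} (hg : g ∈ G) :
    OrbitLE G x 1 g ∨ OrbitLE G x g 1 := by
  by_cases hfix : ∃ y, g y = y
  · obtain ⟨y, hy⟩ := hfix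
    refine .inl fun k hk => ?_
    have hconj : (k⁻¹ * g * k : CircleDeg1Liftˣ) x = x :=
      hx _ (mul_mem (mul_mem (inv_mem hk) hg) hk) ⟨(k⁻¹ : CircleDeg1Liftˣ) y, by simp [hy]⟩
    have := congrArg k hconj
    simp only [Units.val_mul, CircleDeg1Lift.mul_apply, CircleDeg1Lift.units_apply_inv_apply]
      at this
    exact this.ge
  · by_contra! ⟨habove, hbelow⟩
    simp only [OrbitLE, not_forall, not_le] at habove hbelow
    obtain ⟨k, -, hk⟩ := habove
    obtain ⟨l, -, hl⟩ := hbelow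
    obtain ⟨y, hy⟩ := mem_range_of_exists_le_of_exists_ge
      ((lift_continuous g).sub continuous_id) (c := 0) ⟨k x, (sub_neg.2 hk).le⟩
      ⟨l x, (sub_pos.2 hl).le⟩
    exact hfix ⟨y, sub_eq_zero.1 hy⟩

lemma orbitLE_total (hx : IsSharedFixedPoint G x) {f g : CircleDeg1Liftˣ} (hf : f ∈ G)
    (hg : g ∈ G) : OrbitLE G x f g ∨ OrbitLE G x g f := by
  have := orbitLE_one_total hx (mul_mem (inv_mem hf) hg)
  refine this.imp (fun h => ?_) (fun h => ?_)
  · simpa using orbitLE_mul_left f h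
  · simpa using orbitLE_mul_left f h

theorem translationNumber_mul_of_isSharedFixedPoint (hx : IsSharedFixedPoint G x)
    {f g : CircleDeg1Liftˣ} (hf : f ∈ G) (hg : g ∈ G) :
    translationNumber (f * g) = translationNumber f + translationNumber g := by
  rcases orbitLE_total hx (mul_mem hg hf) (mul_mem hf hg) with hle | hle
  · exact translationNumber_mul_of_orbitLE hf hg hle
  · have hsemiconj : translationNumber (f * g) = translationNumber (g * f) :=
      CircleDeg1Lift.translationNumber_eq_of_semiconj (f := g.val) fun y => by simp
    rw [hsemiconj, translationNumber_mul_of_orbitLE hg hf hle, add_comm]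

lemma apply_eq_of_translationNumber_eq_zero (hx : IsSharedFixedPoint G x) {f : CircleDeg1Liftˣ}
    (hf : f ∈ G) (hzero : translationNumber f = 0) : f x = x := by
  obtain ⟨y, hy⟩ := f.val.exists_eq_add_translationNumber (lift_continuous f)
  exact hx f hf ⟨y, by rw [hy, hzero, add_zero]⟩

end TranslationNumber

section ThurstonStability

open Asymptotics

/-- The group `𝓖` has no nontrivial homomorphism to `ℝ`. -/
def HasTrivialRealCharacters (𝓖 : Type*) [Group 𝓖] : Prop :=
  ∀ φ : 𝓖 → ℝ, (∀ g h, φ (g * h) = φ g + φ h) → ∀ g, φ g = 0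

lemma exists_tendsto_of_isBoundedUnder {X : Type*} {𝒰 : Ultrafilter X} {u : X → ℝ}
    (hu : IsBoundedUnder (· ≤ ·) 𝒰 fun x => ‖u x‖) : ∃ L, Tendsto u 𝒰 (𝓝 L) := by
  obtain ⟨C, hC⟩ := hu
  obtain ⟨L, -, hL⟩ := (isCompact_closedBall (0 : ℝ) C).ultrafilter_le_nhds (𝒰.map u)
    (le_principal_iff.2 ((eventually_map.1 hC).mono fun x hx => mem_closedBall_zero_iff.2 hx))
  exact ⟨L, hL⟩

lemma displacement_comp_isLittleO {f h : ℝ → ℝ} {a : ℝ} (hf : HasStrictDerivAt f 1 a)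
    (hh : ContinuousAt h a) (ha : h a = a) :
    (fun y => (f (h y) - h y) - (f y - y)) =o[𝓝 a] fun y => h y - y := by
  have htendsto : Tendsto (fun y => (h y, y)) (𝓝 a) (𝓝 (a, a)) := by
    simpa only [ha, id] using (hh.prodMk continuousAt_id).tendsto
  refine (hf.isLittleO.comp_tendsto htendsto).congr_left fun y => ?_
  simp only [Function.comp_apply, ContinuousLinearMap.toSpanSingleton_apply, smul_eq_mul, mul_one]
  ring

variable {𝓖 : Type*} [Group 𝓖] {A : 𝓖 →* CircleDeg1Liftˣ}

lemma map_mul_apply (A : 𝓖 →* CircleDeg1Liftˣ) (g h : 𝓖) (y : ℝ) : A (g * h) y = A g (A h y) := by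
  rw [map_mul, Units.val_mul, CircleDeg1Lift.mul_apply]

lemma deriv_eq_one_of_hasTrivialRealCharacters (hA : ∀ g, A g ∈ contDiffLifts)
    (hchar : HasTrivialRealCharacters 𝓖) {a : ℝ} (ha : ∀ g, A g a = a) (g : 𝓖) :
    deriv (A g) a = 1 := by
  have hdiff (g : 𝓖) (y : ℝ) : DifferentiableAt ℝ (A g) y := (hA g).1.differentiable one_ne_zero y
  have hlog := hchar (fun g => Real.log (deriv (A g) a)) (fun g h => by
    have hcomp : (A (g * h) : ℝ → ℝ) = A g ∘ A h := funext (map_mul_apply A g h)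
    rw [hcomp, deriv_comp a (hdiff g _) (hdiff h a), ha,
      Real.log_mul (lift_deriv_pos (hA g) a).ne' (lift_deriv_pos (hA h) a).ne']) g
  exact Real.eq_one_of_pos_of_log_eq_zero (lift_deriv_pos (hA g) a) hlog

/-- The sum of the distances by which the elements of `S` move `y`. -/
def totalDisplacement (A : 𝓖 →* CircleDeg1Liftˣ) (S : Finset 𝓖) (y : ℝ) : ℝ :=
  ∑ s ∈ S, |A s y - y|

lemma totalDisplacement_eq_zero_iff {S : Finset 𝓖} (hS : Subgroup.closure (S : Set 𝓖) = ⊤)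
    {y : ℝ} : totalDisplacement A S y = 0 ↔ y ∈ commonFixedPoints A.range := by
  rw [totalDisplacement, Finset.sum_eq_zero_iff_of_nonneg fun s _ => abs_nonneg _]
  refine ⟨fun h => ?_, fun h s _ => by rw [h _ ⟨s, rfl⟩, sub_self, abs_zero]⟩
  rw [MonoidHom.range_eq_map, ← hS, MonoidHom.map_closure]
  refine mem_commonFixedPoints_closure (forall_mem_image.2 fun s hs => ?_)
  exact sub_eq_zero.1 (abs_eq_zero.1 (h s hs))

section TangentToIdentity

variable {a : ℝ} (hderiv : ∀ g, HasStrictDerivAt (A g) 1 a) (ha : ∀ g, A g a = a)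

include hderiv ha

lemma displacement_mul_isLittleO (g h : 𝓖) :
    (fun y => A (g * h) y - y - ((A g y - y) + (A h y - y))) =o[𝓝 a] fun y => A h y - y := by
  refine (displacement_comp_isLittleO (hderiv g) (lift_continuous (A h)).continuousAt
    (ha h)).congr_left fun y => ?_
  rw [map_mul_apply]
  ring

lemma displacement_isBigO {S : Finset 𝓖} (hS : Subgroup.closure (S : Set 𝓖) = ⊤) (g : 𝓖) :
    (fun y => A g y - y) =O[𝓝 a] totalDisplacement A S := by
  have hg : g ∈ Subgroup.closure (S : Set 𝓖) := hS ▸ Subgroup.mem_top g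
  induction hg using Subgroup.closure_induction with
  | mem s hs =>
    refine IsBigO.of_norm_le fun y => ?_
    exact Finset.single_le_sum (f := fun s => |A s y - y|) (fun _ _ => abs_nonneg _) hs
  | one => simpa using isBigO_zero _ _
  | mul g h _ _ hg hh =>
    have hlittle := (displacement_mul_isLittleO hderiv ha g h).isBigO.trans hh
    exact (hlittle.add (hg.add hh)).congr_left fun y => by ring
  | inv g _ hg =>
    have hlittle := (displacement_mul_isLittleO hderiv ha g g⁻¹).right_isBigO_add
    refine hlittle.trans (hg.neg_left.congr_left fun y => ?_)
    simp only [mul_inv_cancel, map_one, Units.val_one, CircleDeg1Lift.coe_one, id]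
    ring

/- Any limit of the normalized displacements is a homomorphism to `ℝ`, and its values on the
generators have absolute values adding up to `1`. -/
lemma frequently_totalDisplacement_eq_zero (hchar : HasTrivialRealCharacters 𝓖) {S : Finset 𝓖}
    (hS : Subgroup.closure (S : Set 𝓖) = ⊤) {l : Filter ℝ} [l.NeBot] (hl : l ≤ 𝓝 a) :
    ∃ᶠ y in l, totalDisplacement A S y = 0 := by
  intro hne
  set δ := totalDisplacement A S
  let 𝒰 := Ultrafilter.of l
  have h𝒰 : (𝒰 : Filter ℝ) ≤ 𝓝 a := (Ultrafilter.of_le l).trans hl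
  have hbig (g : 𝓖) : (fun y => A g y - y) =O[𝒰] δ := (displacement_isBigO hderiv ha hS g).mono h𝒰
  choose φ hφ using fun g =>
    exists_tendsto_of_isBoundedUnder (div_isBoundedUnder_of_isBigO (hbig g))
  have hφ_zero : ∀ g, φ g = 0 := hchar φ fun g h => by
    have hlittle := ((displacement_mul_isLittleO hderiv ha g h).mono h𝒰).trans_isBigO (hbig h)
    refine sub_eq_zero.1 <| tendsto_nhds_unique ((hφ (g * h)).sub ((hφ g).add (hφ h)))
      (hlittle.tendsto_div_nhds_zero.congr fun y => ?_)
    ring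
  have hsum : Tendsto (fun y => ∑ s ∈ S, |(A s y - y) / δ y|) 𝒰 (𝓝 (∑ s ∈ S, |φ s|)) :=
    tendsto_finsetSum _ fun s _ => (hφ s).abs
  have hsum_one : Tendsto (fun y => ∑ s ∈ S, |(A s y - y) / δ y|) 𝒰 (𝓝 1) := by
    refine tendsto_const_nhds.congr' ((hne.filter_mono (Ultrafilter.of_le l)).mono fun y hy => ?_)
    have hδ : |δ y| = δ y := abs_of_nonneg (Finset.sum_nonneg fun _ _ => abs_nonneg _)
    simp only [abs_div, ← Finset.sum_div]
    rw [hδ]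
    exact (div_self hy).symm
  simpa [hφ_zero] using tendsto_nhds_unique hsum hsum_one

end TangentToIdentity

/- Thurston's stability theorem: the set of global fixed points is open. -/
theorem eq_one_of_hasTrivialRealCharacters [Group.FG 𝓖] (hA : ∀ g, A g ∈ contDiffLifts)
    (hchar : HasTrivialRealCharacters 𝓖) {p : ℝ} (hp : ∀ g, A g p = p) (g : 𝓖) : A g = 1 := by
  obtain ⟨S, hS⟩ := Group.FG.out (G := 𝓖)
  have hopen : IsOpen (commonFixedPoints A.range) := by
    rw [← isClosed_compl_iff, isClosed_iff_frequently]
    intro a ha_freq ha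
    have ha_fixed (g : 𝓖) : A g a = a := ha _ ⟨g, rfl⟩
    have hderiv (g : 𝓖) : HasStrictDerivAt (A g) 1 a := by
      have := (hA g).1.contDiffAt.hasStrictDerivAt (x := a) one_ne_zero
      rwa [deriv_eq_one_of_hasTrivialRealCharacters hA hchar ha_fixed] at this
    let l := 𝓝[(commonFixedPoints A.range)ᶜ] a
    have : l.NeBot := frequently_mem_iff_neBot.1 ha_freq
    have hne : ∀ᶠ y in l, totalDisplacement A S y ≠ 0 :=
      eventually_mem_nhdsWithin.mono fun y hy => (totalDisplacement_eq_zero_iff hS).not.2 hy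
    exact frequently_totalDisplacement_eq_zero hderiv ha_fixed hchar hS nhdsWithin_le_nhds hne
  have huniv : commonFixedPoints A.range = univ :=
    IsClopen.eq_univ ⟨isClosed_commonFixedPoints, hopen⟩ ⟨p, forall_mem_range.2 hp⟩
  exact Units.ext <| CircleDeg1Lift.ext fun y => (huniv ▸ mem_univ y) _ ⟨g, rfl⟩

end ThurstonStability

section LiftsOfCircleDiffeomorphisms

lemma circleDeg1Lift_coe_periodic (f : CircleDeg1Lift) :
    Function.Periodic (fun x => (f x : 𝕊)) 1 := fun x => by
  simp only [f.map_add_one, AddCircle.coe_add, AddCircle.coe_period, add_zero]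

/-- The self-map of the circle induced by a degree one lift, as a monoid homomorphism. -/
def circleEnd : CircleDeg1Lift →* Function.End 𝕊 where
  toFun f := (circleDeg1Lift_coe_periodic f).lift
  map_one' := funext fun z => QuotientAddGroup.induction_on z fun _ => rfl
  map_mul' _ _ := funext fun z => QuotientAddGroup.induction_on z fun _ => rfl

/-- The permutation of the circle induced by an invertible degree one lift. -/
def circlePerm : CircleDeg1Liftˣ →* Equiv.Perm 𝕊 :=
  (Equiv.Perm.equivUnitsEnd (α := 𝕊)).symm.toMonoidHom.comp (Units.map circleEnd)

lemma circlePerm_coe (F : CircleDeg1Liftˣ) (x : ℝ) : circlePerm F (x : 𝕊) = (F x : 𝕊) := rfl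

lemma exists_apply_eq_add_intCast_of_circlePerm_eq_one {F : CircleDeg1Liftˣ}
    (hF : circlePerm F = 1) : ∃ k : ℤ, ∀ x, F x = x + k := by
  have hint (x : ℝ) : ∃ k : ℤ, F x - x = k := by
    have hx : ((F x - x : ℝ) : 𝕊) = 0 := by
      rw [AddCircle.coe_sub, ← circlePerm_coe, hF, Equiv.Perm.one_apply, sub_self]
    obtain ⟨k, hk⟩ := (AddCircle.coe_eq_zero_iff 1).1 hx
    exact ⟨k, by simpa using hk.symm⟩
  choose κ hκ using hint
  have hκ_cont : Continuous κ := by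
    rw [Int.isClosedEmbedding_coe_real.isInducing.continuous_iff]
    exact ((lift_continuous F).sub continuous_id).congr hκ
  refine ⟨κ 0, fun x => ?_⟩
  rw [PreconnectedSpace.constant inferInstance hκ_cont (x := 0) (y := x), ← hκ, add_sub_cancel]

lemma exists_apply_eq_add_intCast_of_circlePerm_eq {F G : CircleDeg1Liftˣ}
    (h : circlePerm F = circlePerm G) : ∃ k : ℤ, ∀ x, F x = G x + k := by
  obtain ⟨k, hk⟩ := exists_apply_eq_add_intCast_of_circlePerm_eq_one (F := F * G⁻¹)
    (by rw [map_mul, map_inv, h, mul_inv_cancel])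
  refine ⟨k, fun x => ?_⟩
  rw [← hk, Units.val_mul, CircleDeg1Lift.mul_apply, CircleDeg1Lift.units_inv_apply_apply]

lemma eq_of_circlePerm_eq_of_fixed {F G : CircleDeg1Liftˣ} (h : circlePerm F = circlePerm G)
    {x : ℝ} (hF : F x = x) (hG : G x = x) : F = G := by
  obtain ⟨k, hk⟩ := exists_apply_eq_add_intCast_of_circlePerm_eq h
  have hk_zero : (k : ℝ) = 0 := by linarith [hk x]
  exact Units.ext <| CircleDeg1Lift.ext fun y => by rw [hk, hk_zero, add_zero]

lemma exists_mem_contDiffLifts_of_isC1Diffeo {f : Equiv.Perm 𝕊} (hf : IsC1Diffeo f) :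
    ∃ F ∈ contDiffLifts, circlePerm F = f := by
  obtain ⟨F, ⟨hcont, hmono, hadd, hproj⟩, hdiff, hderiv⟩ := hf
  let F₀ : CircleDeg1Lift := ⟨⟨F, hmono.monotone⟩, hadd⟩
  let e : ℝ ≃o ℝ := hmono.orderIsoOfSurjective F
    (hcont.surjective F₀.tendsto_atTop F₀.tendsto_atBot)
  let F₁ : CircleDeg1Lift := ⟨⟨e.symm, e.symm.monotone⟩, fun x => by
    rw [OrderIso.symm_apply_eq]
    exact ((hadd _).trans (congrArg (· + 1) (e.apply_symm_apply x))).symm⟩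
  let U : CircleDeg1Liftˣ := ⟨F₀, F₁, CircleDeg1Lift.ext e.apply_symm_apply,
    CircleDeg1Lift.ext e.symm_apply_apply⟩
  refine ⟨U, ⟨hdiff, ?_⟩, Equiv.ext fun z => QuotientAddGroup.induction_on z fun x => ?_⟩
  · exact e.toHomeomorph.contDiff_symm_deriv hderiv
      (fun x => (hdiff.differentiable one_ne_zero x).hasDerivAt) hdiff
  · exact (hproj x).symm

variable {H : Type*} [Group H] {ρ : H →* Equiv.Perm 𝕊}

/-- The group of all `C¹` lifts to `ℝ` of the elements of a group of circle permutations. -/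
def liftGroup (G : Subgroup (Equiv.Perm 𝕊)) : Subgroup CircleDeg1Liftˣ :=
  contDiffLifts ⊓ G.comap circlePerm

lemma liftGroup_le_contDiffLifts (G : Subgroup (Equiv.Perm 𝕊)) : liftGroup G ≤ contDiffLifts :=
  inf_le_left

lemma exists_isSharedFixedPoint_liftGroup_of_commute {G G' : Subgroup (Equiv.Perm 𝕊)}
    (hcomm : ∀ f ∈ G, ∀ g ∈ G', Commute f g) :
    (∃ x, IsSharedFixedPoint (liftGroup G) x) ∨ ∃ x, IsSharedFixedPoint (liftGroup G') x := by
  refine exists_isSharedFixedPoint_of_commute (liftGroup_le_contDiffLifts G)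
    (liftGroup_le_contDiffLifts G') fun f hf g hg => ?_
  obtain ⟨k, hk⟩ := exists_apply_eq_add_intCast_of_circlePerm_eq (F := f * g) (G := g * f)
    (by rw [map_mul, map_mul, (hcomm _ hf.2 _ hg.2).eq])
  exact ⟨k, hk⟩

lemma circle_coe_intCast (k : ℤ) : ((k : ℝ) : 𝕊) = 0 :=
  (AddCircle.coe_eq_zero_iff 1).2 ⟨k, by rw [zsmul_one]⟩

lemma translationNumber_eq_add_intCast {F G : CircleDeg1Lift} {k : ℤ} (h : ∀ x, F x = G x + k) :
    F.translationNumber = G.translationNumber + k := by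
  let T : CircleDeg1Lift := CircleDeg1Lift.translate (Multiplicative.ofAdd (k : ℝ))
  have hF : F = T * G := CircleDeg1Lift.ext fun x => by
    rw [CircleDeg1Lift.mul_apply, CircleDeg1Lift.translate_apply, h, add_comm]
  have hcomm : Commute T G := CircleDeg1Lift.ext fun x => by
    simp only [T, CircleDeg1Lift.mul_apply, CircleDeg1Lift.translate_apply,
      CircleDeg1Lift.map_int_add]
  rw [hF, CircleDeg1Lift.translationNumber_mul_of_commute hcomm,
    CircleDeg1Lift.translationNumber_translate, add_comm]

lemma circlePerm_translate_intCast (k : ℤ) :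
    circlePerm (CircleDeg1Lift.translate (Multiplicative.ofAdd (k : ℝ))) = 1 := by
  refine Equiv.ext fun z => QuotientAddGroup.induction_on z fun x => ?_
  rw [circlePerm_coe, CircleDeg1Lift.translate_apply, AddCircle.coe_add,
    circle_coe_intCast, zero_add, Equiv.Perm.one_apply]

lemma translate_intCast_mem_liftGroup (G : Subgroup (Equiv.Perm 𝕊)) (k : ℤ) :
    CircleDeg1Lift.translate (Multiplicative.ofAdd (k : ℝ)) ∈ liftGroup G := by
  have hcontDiff (t : ℝ) : ContDiff ℝ 1 (CircleDeg1Lift.translate (Multiplicative.ofAdd t)) :=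
    contDiff_const.add contDiff_id
  refine ⟨⟨hcontDiff k, ?_⟩, Subgroup.mem_comap.2 ?_⟩
  · rw [← map_inv, ← ofAdd_neg]
    exact hcontDiff (-k)
  · rw [circlePerm_translate_intCast]
    exact one_mem G

/-- The rotation `exp (2πi τ(F))` of the circle by the translation number of `F`. -/
def rotationCharacter (F : CircleDeg1Lift) : ℂˣ :=
  Circle.toUnits (AddCircle.toCircle (F.translationNumber : 𝕊))

lemma exists_translationNumber_eq_intCast {F : CircleDeg1Lift} (h : rotationCharacter F = 1) :
    ∃ k : ℤ, F.translationNumber = k := by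
  have hcircle : AddCircle.toCircle (F.translationNumber : 𝕊) = 1 :=
    Circle.ext (congrArg Units.val h)
  rw [← AddCircle.toCircle_zero, (AddCircle.injective_toCircle one_ne_zero).eq_iff,
    AddCircle.coe_eq_zero_iff] at hcircle
  obtain ⟨k, hk⟩ := hcircle
  exact ⟨k, by simpa using hk.symm⟩

lemma rotationCharacter_eq_of_circlePerm_eq {F G : CircleDeg1Liftˣ}
    (h : circlePerm F = circlePerm G) : rotationCharacter F = rotationCharacter G := by
  obtain ⟨k, hk⟩ := exists_apply_eq_add_intCast_of_circlePerm_eq h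
  rw [rotationCharacter, translationNumber_eq_add_intCast hk, AddCircle.coe_add,
    circle_coe_intCast, add_zero, rotationCharacter]

lemma exists_fixing_lift_of_rotationCharacter_eq_one {G : Subgroup (Equiv.Perm 𝕊)} {x : ℝ}
    (hx : IsSharedFixedPoint (liftGroup G) x) {F : CircleDeg1Liftˣ} (hF : F ∈ liftGroup G)
    (hrot : rotationCharacter F = 1) :
    ∃ F' ∈ liftGroup G, circlePerm F' = circlePerm F ∧ F' x = x := by
  obtain ⟨k, hk⟩ := exists_translationNumber_eq_intCast hrot
  let T := CircleDeg1Lift.translate (Multiplicative.ofAdd ((-k : ℤ) : ℝ))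
  have hmem : T * F ∈ liftGroup G := mul_mem (translate_intCast_mem_liftGroup G _) hF
  refine ⟨T * F, hmem, ?_, apply_eq_of_translationNumber_eq_zero hx hmem ?_⟩
  · rw [map_mul, circlePerm_translate_intCast, one_mul]
  · rw [translationNumber_eq_add_intCast (G := F) (k := -k) fun y => ?_, hk]
    · simp
    · rw [Units.val_mul, CircleDeg1Lift.mul_apply, CircleDeg1Lift.translate_apply, add_comm]

/- On the lifts with a shared fixed point the translation number is additive, so the rotation
number is a homomorphism to `ℝ/ℤ`. -/
theorem exists_character_of_isSharedFixedPoint (hρ : ∀ g, IsC1Diffeo (ρ g)) {x : ℝ}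
    (hx : IsSharedFixedPoint (liftGroup ρ.range) x) :
    ∃ θ : H →* ℂˣ, ∀ g, θ g = 1 → ∃ F ∈ contDiffLifts, circlePerm F = ρ g ∧ F x = x := by
  choose ℓ hℓ_mem hℓ using fun g => exists_mem_contDiffLifts_of_isC1Diffeo (hρ g)
  have hℓ_lift (g : H) : ℓ g ∈ liftGroup ρ.range := ⟨hℓ_mem g, g, (hℓ g).symm⟩
  refine ⟨MonoidHom.mk' (fun g => rotationCharacter (ℓ g)) fun g h => ?_, fun g hg => ?_⟩
  · have hproj : circlePerm (ℓ (g * h)) = circlePerm (ℓ g * ℓ h) := by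
      rw [map_mul, hℓ, hℓ, hℓ, map_mul]
    rw [rotationCharacter_eq_of_circlePerm_eq hproj]
    simp only [rotationCharacter, Units.val_mul]
    rw [translationNumber_mul_of_isSharedFixedPoint hx (hℓ_lift g) (hℓ_lift h), AddCircle.coe_add,
      AddCircle.toCircle_add, map_mul]
  · obtain ⟨F, hF, hproj, hFx⟩ :=
      exists_fixing_lift_of_rotationCharacter_eq_one hx (hℓ_lift g) hg
    exact ⟨F, hF.1, hproj.trans (hℓ g), hFx⟩

theorem eq_one_of_fixing_lifts [Group.FG H] (hchar : HasTrivialRealCharacters H) {x : ℝ}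
    (hlift : ∀ g, ∃ F ∈ contDiffLifts, circlePerm F = ρ g ∧ F x = x) (g : H) : ρ g = 1 := by
  choose ℓ hℓ_mem hℓ hℓx using hlift
  let A : H →* CircleDeg1Liftˣ := MonoidHom.mk' ℓ fun g h => by
    refine eq_of_circlePerm_eq_of_fixed (by rw [map_mul, hℓ, hℓ, hℓ, map_mul]) (hℓx _) ?_
    rw [Units.val_mul, CircleDeg1Lift.mul_apply, hℓx, hℓx]
  have hg : ℓ g = 1 := eq_one_of_hasTrivialRealCharacters (A := A) hℓ_mem hchar hℓx g
  rw [← hℓ, hg, map_one]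

end LiftsOfCircleDiffeomorphisms

/-! ### Cocycles on transvection families -/

section TwistedCocycles

variable {H : Type*} [Group H] {χ : H →* ℂˣ} {c : H → ℂ}

/-- `c` is a `1`-cocycle of `H` with values in the one-dimensional representation `χ`. -/
def IsTwistedCocycle (χ : H →* ℂˣ) (c : H → ℂ) : Prop := ∀ g h, c (g * h) = c g + χ g * c h

/-- `c` is a `1`-coboundary of `H` with values in the one-dimensional representation `χ`. -/
def IsTwistedCoboundary (χ : H →* ℂˣ) (c : H → ℂ) : Prop := ∃ v, ∀ g, c g = (1 - χ g) * v

lemma character_commutator (χ : H →* ℂˣ) (g h : H) : χ ⁅g, h⁆ = 1 := by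
  rw [map_commutatorElement, commutatorElement_eq_one_iff_commute]
  exact Commute.all _ _

lemma one_sub_character_ne_zero {g : H} (hg : χ g ≠ 1) : (1 - χ g : ℂ) ≠ 0 :=
  fun h => hg (Units.ext (sub_eq_zero.1 h).symm)

namespace IsTwistedCocycle

variable (hc : IsTwistedCocycle χ c)

include hc

lemma map_one : c 1 = 0 := by simpa using hc 1 1

lemma map_inv (g : H) : c g⁻¹ = -((χ g : ℂ)⁻¹ * c g) := by
  have h := hc g⁻¹ g
  rw [inv_mul_cancel, hc.map_one, _root_.map_inv, Units.val_inv_eq_inv_val] at h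
  linear_combination -h

lemma map_commutator (g h : H) : c ⁅g, h⁆ = (1 - χ h) * c g - (1 - χ g) * c h := by
  have hg := (χ g).ne_zero
  have hh := (χ h).ne_zero
  rw [commutatorElement_def, hc, hc, hc, hc.map_inv, hc.map_inv]
  simp only [map_mul, _root_.map_inv, Units.val_mul, Units.val_inv_eq_inv_val]
  field_simp
  ring

lemma map_conj {k : H} (hk : χ k = 1) (g : H) : c (g * k * g⁻¹) = χ g * c k := by
  have hg := (χ g).ne_zero
  rw [hc, hc, hc.map_inv, map_mul, hk, mul_one]
  field_simp
  ring

lemma map_pow {g : H} (hg : χ g = 1) (n : ℕ) : c (g ^ n) = n * c g := by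
  induction n with
  | zero => rw [pow_zero, hc.map_one, Nat.cast_zero, zero_mul]
  | succ n ih =>
    rw [pow_succ, hc, ih, _root_.map_pow, hg, one_pow, Units.val_one]
    push_cast
    ring

lemma map_pow_mul_inv_pow {g k : H} (hg : χ g = 1) (hk : χ k = 1) (n : ℕ) :
    c (g ^ n * (k ^ n)⁻¹) = n * (c g - c k) := by
  rw [hc, hc.map_inv, hc.map_pow hg, hc.map_pow hk, _root_.map_pow, _root_.map_pow, hg, hk,
    one_pow, Units.val_one]
  ring

lemma map_commutator_eq_zero_of_commute {g h : H} (hgh : Commute g h) : c ⁅g, h⁆ = 0 := by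
  rw [commutatorElement_eq_one_iff_commute.2 hgh, hc.map_one]

lemma map_commutator_swap {g h : H} (hgh : c ⁅g, h⁆ = 0) : c ⁅h, g⁆ = 0 := by
  rw [hc.map_commutator] at hgh ⊢
  linear_combination -hgh

lemma map_commutator_trans {g k h : H} (hk : χ k ≠ 1) (hgk : c ⁅g, k⁆ = 0) (hkh : c ⁅k, h⁆ = 0) :
    c ⁅g, h⁆ = 0 := by
  rw [hc.map_commutator] at hgk hkh ⊢
  refine mul_left_cancel₀ (one_sub_character_ne_zero hk) ?_
  linear_combination (1 - (χ h : ℂ)) * hgk + (1 - (χ g : ℂ)) * hkh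

lemma isTwistedCoboundary_of_closure_eq_top {S : Set H} (hS : Subgroup.closure S = ⊤) {v : ℂ}
    (hv : ∀ g ∈ S, c g = (1 - χ g) * v) : IsTwistedCoboundary χ c := by
  refine ⟨v, fun g => ?_⟩
  have hg : g ∈ Subgroup.closure S := hS ▸ Subgroup.mem_top g
  induction hg using Subgroup.closure_induction with
  | mem g hg => exact hv g hg
  | one => rw [hc.map_one, _root_.map_one, Units.val_one, sub_self, zero_mul]
  | mul g h _ _ hg hh =>
    rw [hc, hg, hh, map_mul, Units.val_mul]
    ring
  | inv g _ hg =>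
    have := (χ g).ne_zero
    rw [hc.map_inv, hg, _root_.map_inv, Units.val_inv_eq_inv_val]
    field_simp
    ring

end IsTwistedCocycle

end TwistedCocycles

section InducedCocycle

variable {H : Type*} [Group H] {θ : H →* ℂˣ} {s : θ.range → H} (hs : ∀ ζ, θ (s ζ) = ζ)

/-- The discrepancy, in the kernel of `θ`, between left multiplication by `g` and a section `s`
of `θ`. -/
def sectionCocycle (g : H) (ζ : θ.range) : θ.ker :=
  ⟨(s (θ.rangeRestrict g * ζ))⁻¹ * g * s ζ, by
    rw [MonoidHom.mem_ker, map_mul, map_mul, map_inv, hs, hs, Subgroup.coe_mul,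
      MonoidHom.coe_rangeRestrict, mul_assoc, inv_mul_cancel]⟩

lemma sectionCocycle_mul (g h : H) (ζ : θ.range) :
    sectionCocycle hs (g * h) ζ =
      sectionCocycle hs g (θ.rangeRestrict h * ζ) * sectionCocycle hs h ζ :=
  Subtype.ext <| by
    simp only [sectionCocycle, Subgroup.coe_mul, map_mul, mul_assoc, mul_inv_cancel_left]

lemma map_sectionCocycle_one {φ : θ.ker → ℝ}
    (hφ : ∀ g h, φ (g * h) = φ g + φ h) (g : θ.ker) : φ (sectionCocycle hs g 1) = φ g := by
  have hs1 : s 1 ∈ θ.ker := hs 1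
  have hg1 : θ.rangeRestrict g = 1 := Subtype.ext g.2
  have hg : sectionCocycle hs g 1 = (⟨s 1, hs1⟩ : θ.ker)⁻¹ * g * ⟨s 1, hs1⟩ :=
    Subtype.ext (by
      simp only [sectionCocycle, hg1, mul_one]
      rfl)
  have hconj := hφ (⟨s 1, hs1⟩ : θ.ker) (sectionCocycle hs g 1)
  rw [hg, mul_assoc, mul_inv_cancel_left, ← mul_assoc, ← hg, hφ] at hconj
  linarith

variable [Fintype θ.range]

/-- The component for the character `θ ^ j` of the cocycle of `H` induced, as in Shapiro's lemma,
by `φ` on the kernel of `θ`. -/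
def inducedCocycle (φ : θ.ker → ℝ) (j : ℕ) (g : H) : ℂ :=
  ∑ ζ, ((θ.rangeRestrict g * ζ : θ.range) : ℂˣ) ^ j * (φ (sectionCocycle hs g ζ) : ℂ)

variable {φ : θ.ker → ℝ} (hφ : ∀ g h, φ (g * h) = φ g + φ h)

include hφ

lemma isTwistedCocycle_inducedCocycle (j : ℕ) :
    IsTwistedCocycle (θ ^ j) (inducedCocycle hs φ j) := by
  intro g h
  have hreindex : inducedCocycle hs φ j g = ∑ ζ,
      ((θ.rangeRestrict g * (θ.rangeRestrict h * ζ) : θ.range) : ℂˣ) ^ j *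
        (φ (sectionCocycle hs g (θ.rangeRestrict h * ζ)) : ℂ) :=
    (Equiv.sum_comp (Equiv.mulLeft (θ.rangeRestrict h)) _).symm
  rw [hreindex, inducedCocycle, inducedCocycle, Finset.mul_sum, ← Finset.sum_add_distrib]
  refine Finset.sum_congr rfl fun ζ _ => ?_
  rw [sectionCocycle_mul, hφ, map_mul, mul_assoc]
  push_cast [MonoidHom.pow_apply, MonoidHom.coe_rangeRestrict]
  ring

lemma sum_inducedCocycle {n : ℕ} (hθ : ∀ g, θ g ^ n = 1) (g : θ.ker) :
    ∑ j ∈ Finset.range n, inducedCocycle hs φ j g = n * φ g := by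
  have hg : θ.rangeRestrict g = 1 := Subtype.ext g.2
  have hgeom (ζ : θ.range) (hζ : ζ ≠ 1) : ∑ j ∈ Finset.range n, ((ζ : ℂˣ) : ℂ) ^ j = 0 := by
    have hroot : ((ζ : ℂˣ) : ℂ) ^ n = 1 := by
      rw [← hs ζ, ← Units.val_pow_eq_pow_val, hθ, Units.val_one]
    have hne : ((ζ : ℂˣ) : ℂ) - 1 ≠ 0 := fun h =>
      hζ (Subtype.ext (Units.ext (sub_eq_zero.1 h)))
    have hmul := mul_geom_sum ((ζ : ℂˣ) : ℂ) n
    rw [hroot, sub_self] at hmul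
    exact (mul_eq_zero.1 hmul).resolve_left hne
  simp only [inducedCocycle, hg, one_mul]
  rw [Finset.sum_comm]
  simp only [← Finset.sum_mul]
  rw [Finset.sum_eq_single 1 (fun ζ _ hζ => by rw [hgeom ζ hζ, zero_mul])
    (fun h => absurd (Finset.mem_univ _) h), map_sectionCocycle_one hs hφ]
  simp only [Subgroup.coe_one, Units.val_one, one_pow, Finset.sum_const, Finset.card_range,
    nsmul_eq_mul, mul_one]

end InducedCocycle

section Transfer

variable {H : Type*} [Group H] {θ : H →* ℂˣ}

lemma finite_range_of_pow_eq_one {n : ℕ} (hn : n ≠ 0) (hθ : ∀ g, θ g ^ n = 1) :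
    Finite θ.range := by
  have : NeZero n := ⟨hn⟩
  have hle : θ.range ≤ rootsOfUnity n ℂ := by
    rintro _ ⟨g, rfl⟩
    exact hθ g
  exact Finite.of_injective _ (Subgroup.inclusion_injective hle)

theorem hasTrivialRealCharacters_ker {n : ℕ} (hn : n ≠ 0) (hθ : ∀ g, θ g ^ n = 1)
    (hcob : ∀ (j : ℕ) (c : H → ℂ), IsTwistedCocycle (θ ^ j) c → IsTwistedCoboundary (θ ^ j) c) :
    HasTrivialRealCharacters θ.ker := by
  intro φ hφ g
  have := finite_range_of_pow_eq_one hn hθ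
  have := Fintype.ofFinite θ.range
  choose s hs using fun ζ : θ.range => ζ.2
  have hzero (j : ℕ) : inducedCocycle hs φ j g = 0 := by
    obtain ⟨v, hv⟩ := hcob j _ (isTwistedCocycle_inducedCocycle hs hφ j)
    rw [hv, MonoidHom.pow_apply, MonoidHom.mem_ker.1 g.2, one_pow, Units.val_one, sub_self,
      zero_mul]
  have hsum := sum_inducedCocycle hs hφ hθ g
  rw [Finset.sum_eq_zero fun j _ => hzero j, eq_comm, mul_eq_zero] at hsum
  exact_mod_cast hsum.resolve_left (Nat.cast_ne_zero.2 hn)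

end Transfer

section TransvectionFamilies

variable {ι H H' : Type*} [Group H] [Group H']

/-- The factor by which `⁅⁅k, l * y⁆, k⁆` exceeds `⁅⁅k, l⁆, k⁆` on the left. -/
def commutatorExpansion (k l y : H) : H := ⁅k, l⁆ * ⁅l * ⁅k, y⁆ * l⁻¹, k⁆ * ⁅k, l⁆⁻¹

lemma commutator_mul_right_commutator (k l y : H) :
    ⁅⁅k, l * y⁆, k⁆ = commutatorExpansion k l y * ⁅⁅k, l⁆, k⁆ := by
  simp only [commutatorExpansion, commutatorElement_def]
  group

lemma map_commutatorExpansion (f : H →* H') (k l y : H) :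
    f (commutatorExpansion k l y) = commutatorExpansion (f k) (f l) (f y) := by
  simp only [commutatorExpansion, map_mul, map_inv, map_commutatorElement]

/-- The relations satisfied by the automorphisms `K a b : x_a ↦ x_b⁻¹ x_a x_b`,
`R a b : x_a ↦ x_a x_b ^ N` and `M a b c : x_a ↦ x_a ⁅⁅x_b, x_c⁆, x_b⁆` of a free group. -/
structure IsTransvectionFamily (N : ℕ) (K R : ι → ι → H) (M : ι → ι → ι → H) : Prop where
  K_self (a) : K a a = 1
  R_self (a) : R a a = 1
  M_eq_one {a b c} : ¬[a, b, c].Nodup → M a b c = 1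
  commute_K_K_target {a b c} : [a, b, c].Nodup → Commute (K a c) (K b c)
  commute_K_K_disjoint {a b c d} : [a, b, c, d].Nodup → Commute (K a b) (K c d)
  commute_K_K_mul_K {a b c} : [a, b, c].Nodup → Commute (K a b) (K b c * K a c)
  R_mul_K {a b c} : [a, b, c].Nodup → R b c * K a b = K a b * K a c ^ N * R b c
  R_mul_R {a b c} : [a, b, c].Nodup →
    R b c * R a b = (K a b * R a c) ^ N * (K a b ^ N)⁻¹ * R a b * R b c
  R_mul_M {a b c d} : [a, b, c, d].Nodup →
    R c d * M a b c = commutatorExpansion (K a b) (K a c) (R a d) * M a b c * R c d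
  M_mul_M {a b c d} : [a, b, c, d].Nodup →
    M c b d * M a b c = commutatorExpansion (K a b) (K a c) (M a b d) * M a b c * M c b d
  commutator_R {a b c} : [a, b, c].Nodup →
    ⁅⁅K a b, K a c⁆, R a b⁆ = (M a b c * K a b) ^ N * (K a b ^ N)⁻¹
  M_mul_K {a b c d} : [a, b, c, d].Nodup →
    M b c d * K a b = K a b * ⁅⁅K a c, K a d⁆, K a c⁆ * M b c d
  M_mul_K_mul_K {a b c} : [a, b, c].Nodup →
    M c a b * (K a c * K b c) =
      ⁅(K b a * K c a)⁻¹, ⁅(K a b * K c b)⁻¹, (K b a * K c a)⁻¹⁆⁻¹⁆ * (K a c * K b c) * M c a b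

lemma IsTransvectionFamily.of_map_injective {N : ℕ} {K R : ι → ι → H} {M : ι → ι → ι → H}
    {f : H →* H'} (hf : Function.Injective f)
    (hr : IsTransvectionFamily N (fun a b => f (K a b)) (fun a b => f (R a b))
      fun a b c => f (M a b c)) : IsTransvectionFamily N K R M where
  K_self a := hf (by simpa only [map_one] using hr.K_self a)
  R_self a := hf (by simpa only [map_one] using hr.R_self a)
  M_eq_one h := hf (by simpa only [map_one] using hr.M_eq_one h)
  commute_K_K_target h := .of_map hf (hr.commute_K_K_target h)
  commute_K_K_disjoint h := .of_map hf (hr.commute_K_K_disjoint h)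
  commute_K_K_mul_K h := .of_map hf (by simpa only [map_mul] using hr.commute_K_K_mul_K h)
  R_mul_K h := hf (by simpa only [map_mul, map_pow] using hr.R_mul_K h)
  R_mul_R h := hf (by simpa only [map_mul, map_pow, map_inv] using hr.R_mul_R h)
  R_mul_M h := hf (by simpa only [map_mul, map_commutatorExpansion] using hr.R_mul_M h)
  M_mul_M h := hf (by simpa only [map_mul, map_commutatorExpansion] using hr.M_mul_M h)
  commutator_R h := hf (by
    simpa only [map_mul, map_pow, map_inv, map_commutatorElement] using hr.commutator_R h)
  M_mul_K h := hf (by simpa only [map_mul, map_commutatorElement] using hr.M_mul_K h)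
  M_mul_K_mul_K h := hf (by
    simpa only [map_mul, map_inv, map_commutatorElement] using hr.M_mul_K_mul_K h)

lemma exists_notMem_of_length_lt_card [Fintype ι] {l : List ι} (hl : l.length < Fintype.card ι) :
    ∃ a, a ∉ l := by
  classical
  obtain ⟨a, -, ha⟩ := Finset.exists_mem_notMem_of_card_lt_card
    (l.toFinset_card_le.trans_lt hl : l.toFinset.card < Finset.univ.card)
  exact ⟨a, fun h => ha (List.mem_toFinset.2 h)⟩

lemma character_commutatorExpansion (χ : H →* ℂˣ) (k l y : H) :
    χ (commutatorExpansion k l y) = 1 := by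
  simp only [commutatorExpansion, map_mul, map_inv, character_commutator, inv_one, one_mul]

lemma IsTwistedCocycle.map_commutatorExpansion {χ : H →* ℂˣ} {c : H → ℂ}
    (hc : IsTwistedCocycle χ c) (k l : H) {y : H} (hy : χ y = 1) :
    c (commutatorExpansion k l y) = -((1 - χ k) ^ 2 * χ l * c y) := by
  have hconj : χ (l * ⁅k, y⁆ * l⁻¹) = 1 := by
    rw [map_mul, map_mul, character_commutator, mul_one, _root_.map_inv, mul_inv_cancel]
  rw [commutatorExpansion, hc.map_conj (character_commutator _ _ _), character_commutator,
    hc.map_commutator, hc.map_conj (character_commutator _ _ _), hc.map_commutator, hy, hconj,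
    Units.val_one]
  ring

lemma IsTwistedCocycle.eq_zero_of_commutatorExpansion {χ : H →* ℂˣ} {c : H → ℂ}
    (hc : IsTwistedCocycle χ c) {k l x y z : H} (hk : χ k ≠ 1) (hx : χ x = 1) (hy : χ y = 1)
    (hz : χ z = 1) (h : x * z = commutatorExpansion k l y * z * x) : c y = 0 := by
  have hcoc := congrArg c h
  rw [hc, hc, hc, hc.map_commutatorExpansion _ _ hy, map_mul, character_commutatorExpansion, hx,
    hz, mul_one, Units.val_one] at hcoc
  have hprod : ((1 - χ k : ℂ) ^ 2 * χ l) * c y = 0 := by linear_combination hcoc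
  exact (mul_eq_zero.1 hprod).resolve_left
    (mul_ne_zero (pow_ne_zero 2 (one_sub_character_ne_zero hk)) (χ l).ne_zero)

lemma IsTwistedCocycle.eq_zero_of_mul_commutator_commutator {χ : H →* ℂˣ} {c : H → ℂ}
    (hc : IsTwistedCocycle χ c) {k l x y : H} (hk : χ k ≠ 1) (hx : χ x = 1) (hcx : c x = 0)
    (h : x * y = ⁅k⁻¹, ⁅l⁻¹, k⁻¹⁆⁻¹⁆ * y * x) : c ⁅l, k⁆ = 0 := by
  have hk0 := (χ k).ne_zero
  have hl0 := (χ l).ne_zero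
  have hone : χ ⁅l⁻¹, k⁻¹⁆⁻¹ = 1 := by rw [_root_.map_inv, character_commutator, inv_one]
  have hinner : c ⁅l⁻¹, k⁻¹⁆ = (χ l : ℂ)⁻¹ * (χ k : ℂ)⁻¹ * c ⁅l, k⁆ := by
    simp only [hc.map_commutator, hc.map_inv, _root_.map_inv, Units.val_inv_eq_inv_val]
    field_simp
    ring
  have houter : (1 - (χ k : ℂ)⁻¹) * c ⁅l⁻¹, k⁻¹⁆ = 0 := by
    have hcoc := congrArg c h
    rw [hc, hc, hc, hcx, hx, character_commutator, hc.map_commutator, hone, hc.map_inv ⁅_, _⁆,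
      character_commutator, _root_.map_inv, Units.val_inv_eq_inv_val, Units.val_one,
      inv_one] at hcoc
    linear_combination -hcoc
  have hk' : (1 - (χ k : ℂ)⁻¹) ≠ 0 := by
    simpa [_root_.map_inv] using one_sub_character_ne_zero (χ := χ) (g := k⁻¹) (by simpa using hk)
  rw [hinner] at houter
  simpa [hk', hk0, hl0] using houter

/-- The union of the three families of elements `K a b`, `R a b` and `M a b c`. -/
def transvections (K R : ι → ι → H) (M : ι → ι → ι → H) : Set H :=
  range K.uncurry ∪ range R.uncurry ∪ range fun p : ι × ι × ι => M p.1 p.2.1 p.2.2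

lemma image_transvections (f : H →* H') (K R : ι → ι → H) (M : ι → ι → ι → H) :
    f '' transvections K R M =
      transvections (fun a b => f (K a b)) (fun a b => f (R a b)) fun a b c => f (M a b c) := by
  simp only [transvections, image_union, ← range_comp]
  rfl

lemma finite_transvections [Finite ι] {X : Type*} (K R : ι → ι → X) (M : ι → ι → ι → X) :
    (transvections K R M).Finite :=
  ((finite_range _).union (finite_range _)).union (finite_range _)

namespace IsTransvectionFamily

variable {N : ℕ} {K R : ι → ι → H} {M : ι → ι → ι → H} {χ : H →* ℂˣ} {c : H → ℂ}
  (hr : IsTransvectionFamily N K R M)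

include hr

lemma exists_generating_subgroup :
    ∃ (L : Subgroup H) (K' R' : ι → ι → L) (M' : ι → ι → ι → L), IsTransvectionFamily N K' R' M' ∧
      Subgroup.closure (transvections K' R' M') = ⊤ ∧ (∀ a b, (R' a b : H) = R a b) ∧
      ∀ a b c, (M' a b c : H) = M a b c := by
  let L := Subgroup.closure (transvections K R M)
  have hmem {g : H} (hg : g ∈ transvections K R M) : g ∈ L := Subgroup.subset_closure hg
  let K' (a b : ι) : L := ⟨K a b, hmem (.inl (.inl ⟨(a, b), rfl⟩))⟩
  let R' (a b : ι) : L := ⟨R a b, hmem (.inl (.inr ⟨(a, b), rfl⟩))⟩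
  let M' (a b c : ι) : L := ⟨M a b c, hmem (.inr ⟨(a, b, c), rfl⟩)⟩
  refine ⟨L, K', R', M', .of_map_injective L.subtype_injective hr, ?_, fun _ _ => rfl,
    fun _ _ _ => rfl⟩
  refine Subgroup.map_injective L.subtype_injective ?_
  rw [MonoidHom.map_closure, image_transvections, ← MonoidHom.range_eq_map, L.range_subtype]
  rfl

section Characters

variable [Fintype ι] (hcard : 3 ≤ Fintype.card ι)

include hcard

lemma character_K_pow_eq_one (χ : H →* ℂˣ) (a b : ι) : χ (K a b) ^ N = 1 := by
  rcases eq_or_ne a b with rfl | hab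
  · rw [hr.K_self, map_one, one_pow]
  obtain ⟨d, hd⟩ := exists_notMem_of_length_lt_card (l := [a, b]) hcard
  have h := congrArg χ (hr.R_mul_K (a := a) (b := d) (c := b) (by grind))
  rw [map_mul, map_mul, map_mul, map_pow, mul_comm, mul_left_inj] at h
  exact mul_eq_left.1 h.symm

lemma character_R_pow_eq_one (χ : H →* ℂˣ) (a b : ι) : χ (R a b) ^ N = 1 := by
  rcases eq_or_ne a b with rfl | hab
  · rw [hr.R_self, map_one, one_pow]
  obtain ⟨d, hd⟩ := exists_notMem_of_length_lt_card (l := [a, b]) hcard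
  have h := congrArg χ (hr.R_mul_R (a := a) (b := d) (c := b) (by grind))
  simp only [map_mul, map_pow, map_inv, mul_pow] at h
  rw [mul_right_comm (χ (K a d) ^ N), mul_inv_cancel, one_mul, mul_assoc, mul_comm (χ (R d b)),
    right_eq_mul] at h
  exact h

lemma character_pow_eq_one (hgen : Subgroup.closure (transvections K R M) = ⊤)
    (hM : ∀ a b c, χ (M a b c) = 1) (g : H) : χ g ^ N = 1 := by
  suffices (⊤ : Subgroup H) ≤ (χ ^ N).ker from this (Subgroup.mem_top g)
  rw [← hgen, Subgroup.closure_le]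
  rintro _ ((⟨p, rfl⟩ | ⟨p, rfl⟩) | ⟨p, rfl⟩)
  · exact hr.character_K_pow_eq_one hcard χ p.1 p.2
  · exact hr.character_R_pow_eq_one hcard χ p.1 p.2
  · exact (congrArg (· ^ N) (hM p.1 p.2.1 p.2.2)).trans (one_pow N)

end Characters

section Cocycles

variable [Fintype ι] (hcard : 4 ≤ Fintype.card ι) (hN : N ≠ 0) (hc : IsTwistedCocycle χ c)
  (hR : ∀ a b, χ (R a b) = 1) (hM : ∀ a b d, χ (M a b d) = 1)

include hcard hN hc hR hM

lemma cocycle_R_eq_zero (a b : ι) : c (R a b) = 0 := by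
  rcases eq_or_ne a b with rfl | hab
  · rw [hr.R_self, hc.map_one]
  obtain ⟨d, hd⟩ := exists_notMem_of_length_lt_card (l := [a, b]) (by simpa using by lia)
  obtain ⟨e, he⟩ := exists_notMem_of_length_lt_card (l := [a, b, d]) hcard
  by_cases hK : χ (K a d) = 1
  · have h := congrArg c (hr.R_mul_R (a := a) (b := d) (c := b) (by grind))
    have hKR : χ (K a d * R a b) = 1 := by rw [map_mul, hK, hR, one_mul]
    rw [hc, hc _ (R d b), hc _ (R a d), hc.map_pow_mul_inv_pow hKR hK, hc (K a d)] at h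
    simp only [map_mul, map_pow, map_inv, hR, hK, one_pow, inv_one, one_mul, Units.val_one] at h
    have hmul : (N : ℂ) * c (R a b) = 0 := by linear_combination -h
    exact (mul_eq_zero.1 hmul).resolve_left (Nat.cast_ne_zero.2 hN)
  · exact hc.eq_zero_of_commutatorExpansion hK (hR e b) (hR a b) (hM a d e)
      (hr.R_mul_M (by grind))

lemma cocycle_M_eq_zero (a b d : ι) : c (M a b d) = 0 := by
  by_cases habd : [a, b, d].Nodup
  swap
  · rw [hr.M_eq_one habd, hc.map_one]
  by_cases hK : χ (K a b) = 1
  · have h := congrArg c (hr.commutator_R habd)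
    have hMK : χ (M a b d * K a b) = 1 := by rw [map_mul, hM, hK, one_mul]
    rw [hc.map_pow_mul_inv_pow hMK hK, hc, hM, hc.map_commutator, character_commutator, hR,
      Units.val_one] at h
    have hmul : (N : ℂ) * c (M a b d) = 0 := by linear_combination -h
    exact (mul_eq_zero.1 hmul).resolve_left (Nat.cast_ne_zero.2 hN)
  · obtain ⟨e, he⟩ := exists_notMem_of_length_lt_card (l := [a, b, d]) hcard
    exact hc.eq_zero_of_commutatorExpansion hK (hM e b d) (hM a b d) (hM a b e)
      (hr.M_mul_M (by grind))

lemma cocycle_K_eq_zero {a b : ι} (hK : χ (K a b) = 1) : c (K a b) = 0 := by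
  rcases eq_or_ne a b with rfl | hab
  · rw [hr.K_self, hc.map_one]
  obtain ⟨d, hd⟩ := exists_notMem_of_length_lt_card (l := [a, b]) (by simpa using by lia)
  have h := congrArg c (hr.R_mul_K (a := a) (b := d) (c := b) (by grind))
  rw [hc, hc, hc, hc.map_pow hK, hr.cocycle_R_eq_zero hcard hN hc hR hM, hR] at h
  have hmul : (χ (K a d) : ℂ) * (N * c (K a b)) = 0 := by
    rw [Units.val_one] at h
    linear_combination -h
  simpa [hN] using hmul

lemma cocycle_commutator_K_eq_zero_of_character {a b : ι} (hK : χ (K a b) = 1) (g : H) :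
    c ⁅K a b, g⁆ = 0 := by
  rw [hc.map_commutator, hr.cocycle_K_eq_zero hcard hN hc hR hM hK, hK, Units.val_one, mul_zero,
    sub_self, zero_mul, sub_zero]

lemma cocycle_commutator_K_source_eq_zero {a b d : ι} (h : [a, b, d].Nodup) :
    c ⁅K a b, K a d⁆ = 0 := by
  by_cases hK : χ (K a b) = 1
  · exact hr.cocycle_commutator_K_eq_zero_of_character hcard hN hc hR hM hK _
  obtain ⟨e, he⟩ := exists_notMem_of_length_lt_card (l := [a, b, d]) hcard
  have hcoc := congrArg c (hr.M_mul_K (a := a) (b := e) (c := b) (d := d) (by grind))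
  rw [hc, hc, hc, hr.cocycle_M_eq_zero hcard hN hc hR hM, hM, hc.map_commutator ⁅_, _⁆,
    character_commutator, Units.val_one] at hcoc
  have hprod : ((χ (K a e) : ℂ) * (1 - χ (K a b))) * c ⁅K a b, K a d⁆ = 0 := by
    linear_combination -hcoc
  exact (mul_eq_zero.1 hprod).resolve_left
    (mul_ne_zero (χ (K a e)).ne_zero (one_sub_character_ne_zero hK))

lemma cocycle_commutator_K_chain_eq_zero {a b d : ι} (h : [a, b, d].Nodup) :
    c ⁅K a b, K b d⁆ = 0 := by
  have hprod := hc.map_commutator_eq_zero_of_commute (hr.commute_K_K_mul_K h)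
  have hsource := hr.cocycle_commutator_K_source_eq_zero hcard hN hc hR hM h
  rw [hc.map_commutator, hc, map_mul, Units.val_mul] at hprod
  rw [hc.map_commutator] at hsource ⊢
  linear_combination hprod - (χ (K b d) : ℂ) * hsource

lemma cocycle_commutator_K_opposite_eq_zero {a b : ι} (hab : a ≠ b) :
    c ⁅K a b, K b a⁆ = 0 := by
  have hchain {p q s : ι} (h : [p, q, s].Nodup) : c ⁅K p q, K q s⁆ = 0 :=
    hr.cocycle_commutator_K_chain_eq_zero hcard hN hc hR hM h
  have htarget {p q s : ι} (h : [p, q, s].Nodup) : c ⁅K p s, K q s⁆ = 0 :=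
    hc.map_commutator_eq_zero_of_commute (hr.commute_K_K_target h)
  obtain ⟨d, hd⟩ := exists_notMem_of_length_lt_card (l := [a, b]) (by simpa using by lia)
  by_cases hdb : χ (K d b) = 1
  swap
  · exact hc.map_commutator_trans hdb (htarget (by grind)) (hchain (by grind))
  by_cases hda : χ (K d a) = 1
  swap
  · exact hc.map_commutator_trans hda (hc.map_commutator_swap (hchain (by grind)))
      (htarget (by grind))
  by_cases hba : χ (K b a) = 1
  · exact hc.map_commutator_swap
      (hr.cocycle_commutator_K_eq_zero_of_character hcard hN hc hR hM hba _)
  have hcK {p q : ι} (h : χ (K p q) = 1) := hr.cocycle_K_eq_zero hcard hN hc hR hM h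
  have hcb : c (K a b * K d b) = c (K a b) := by rw [hc, hcK hdb, mul_zero, add_zero]
  have hca : c (K b a * K d a) = c (K b a) := by rw [hc, hcK hda, mul_zero, add_zero]
  have hχb : χ (K a b * K d b) = χ (K a b) := by rw [map_mul, hdb, mul_one]
  have hχa : χ (K b a * K d a) = χ (K b a) := by rw [map_mul, hda, mul_one]
  have h := hc.eq_zero_of_mul_commutator_commutator (hχa ▸ hba) (hM _ _ _)
    (hr.cocycle_M_eq_zero hcard hN hc hR hM _ _ _)
    (hr.M_mul_K_mul_K (a := a) (b := b) (c := d) (by grind))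
  rw [hc.map_commutator] at h ⊢
  rwa [hcb, hca, hχb, hχa] at h

lemma cocycle_commutator_K_eq_zero (a b d e : ι) : c ⁅K a b, K d e⁆ = 0 := by
  rcases eq_or_ne a b with rfl | hab
  · rw [hr.K_self, commutatorElement_one_left, hc.map_one]
  rcases eq_or_ne d e with rfl | hde
  · rw [hr.K_self, commutatorElement_one_right, hc.map_one]
  rcases eq_or_ne a d with rfl | had <;> rcases eq_or_ne b e with rfl | hbe
  · rw [commutatorElement_self, hc.map_one]
  · exact hr.cocycle_commutator_K_source_eq_zero hcard hN hc hR hM (by grind)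
  · exact hc.map_commutator_eq_zero_of_commute (hr.commute_K_K_target (by grind))
  rcases eq_or_ne b d with rfl | hbd <;> rcases eq_or_ne a e with rfl | hae
  · exact hr.cocycle_commutator_K_opposite_eq_zero hcard hN hc hR hM hab
  · exact hr.cocycle_commutator_K_chain_eq_zero hcard hN hc hR hM (by grind)
  · exact hc.map_commutator_swap
      (hr.cocycle_commutator_K_chain_eq_zero hcard hN hc hR hM (by grind))
  · exact hc.map_commutator_eq_zero_of_commute (hr.commute_K_K_disjoint (by grind))

lemma exists_cocycle_K_eq : ∃ v, ∀ a b, c (K a b) = (1 - χ (K a b)) * v := by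
  by_cases htriv : ∀ a b, χ (K a b) = 1
  · refine ⟨0, fun a b => ?_⟩
    rw [hr.cocycle_K_eq_zero hcard hN hc hR hM (htriv a b), mul_zero]
  push Not at htriv
  obtain ⟨d, e, hde⟩ := htriv
  refine ⟨c (K d e) / (1 - χ (K d e)), fun a b => ?_⟩
  have hcomm := hr.cocycle_commutator_K_eq_zero hcard hN hc hR hM a b d e
  rw [hc.map_commutator] at hcomm
  have hne := one_sub_character_ne_zero hde
  field_simp
  linear_combination hcomm

theorem isTwistedCoboundary (hgen : Subgroup.closure (transvections K R M) = ⊤) :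
    IsTwistedCoboundary χ c := by
  obtain ⟨v, hv⟩ := hr.exists_cocycle_K_eq hcard hN hc hR hM
  refine hc.isTwistedCoboundary_of_closure_eq_top hgen (v := v) ?_
  rintro _ ((⟨p, rfl⟩ | ⟨p, rfl⟩) | ⟨p, rfl⟩)
  · exact hv p.1 p.2
  · rw [Function.uncurry, hR, hr.cocycle_R_eq_zero hcard hN hc hR hM, Units.val_one, sub_self,
      zero_mul]
  · rw [hM, hr.cocycle_M_eq_zero hcard hN hc hR hM, Units.val_one, sub_self, zero_mul]

end Cocycles

end IsTransvectionFamily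

end TransvectionFamilies

/-! ### Automorphisms of free groups -/

section LetterAutomorphisms

open FreeGroup (of)

variable {α β : Type*}

lemma freeGroupAut_ext {f g : MulAut (FreeGroup α)} (h : ∀ x, f (of x) = g (of x)) : f = g :=
  MulEquiv.toMonoidHom_injective (FreeGroup.ext_hom _ _ h)

lemma mulAut_mul_conj {G : Type*} [Group G] (f : MulAut G) (g : G) :
    f * MulAut.conj g = MulAut.conj (f g) * f := by
  ext x
  simp only [MulAut.mul_apply, MulAut.conj_apply, map_mul, map_inv]

section Extension

variable (e : α ↪ β)

/-- The endomorphism of the free group on `β` which acts as `f` on the letters in the range of `e`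
and fixes the other letters. -/
def extendEnd (f : FreeGroup α →* FreeGroup α) : FreeGroup β →* FreeGroup β :=
  FreeGroup.lift (Function.extend e (fun x => FreeGroup.map e (f (of x))) of)

variable {e}

lemma extendEnd_of_notMem_range (f : FreeGroup α →* FreeGroup α) {y : β} (hy : y ∉ range e) :
    extendEnd e f (of y) = of y := by
  rw [extendEnd, FreeGroup.lift_apply_of, Function.extend_apply' _ _ _ hy]

lemma extendEnd_map (f : FreeGroup α →* FreeGroup α) (w : FreeGroup α) :
    extendEnd e f (FreeGroup.map e w) = FreeGroup.map e (f w) := by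
  have h : (extendEnd e f).comp (FreeGroup.map e) = (FreeGroup.map e).comp f := by
    ext x
    rw [MonoidHom.comp_apply, MonoidHom.comp_apply, FreeGroup.map.of, extendEnd,
      FreeGroup.lift_apply_of, e.injective.extend_apply]
  exact DFunLike.congr_fun h w

lemma extendEnd_comp (f g : FreeGroup α →* FreeGroup α) :
    extendEnd e (f.comp g) = (extendEnd e f).comp (extendEnd e g) := by
  ext y
  rw [MonoidHom.comp_apply]
  by_cases hy : y ∈ range e
  · obtain ⟨x, rfl⟩ := hy
    rw [← FreeGroup.map.of, extendEnd_map, extendEnd_map, extendEnd_map, MonoidHom.comp_apply]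
  · rw [extendEnd_of_notMem_range _ hy, extendEnd_of_notMem_range _ hy,
      extendEnd_of_notMem_range _ hy]

lemma extendEnd_id : extendEnd e (MonoidHom.id _) = MonoidHom.id _ := by
  ext y
  by_cases hy : y ∈ range e
  · obtain ⟨x, rfl⟩ := hy
    rw [← FreeGroup.map.of, extendEnd_map, MonoidHom.id_apply, MonoidHom.id_apply]
  · rw [extendEnd_of_notMem_range _ hy, MonoidHom.id_apply]

variable (e)

/-- The embedding of automorphism groups induced by the inclusion `e` of letters: the letters
outside the range of `e` are fixed. -/
def extendAut : MulAut (FreeGroup α) →* MulAut (FreeGroup β) where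
  toFun f := MonoidHom.toMulEquiv (extendEnd e f) (extendEnd e f.symm)
    (by rw [← extendEnd_comp, MulEquiv.coe_monoidHom_symm_comp_coe_monoidHom, extendEnd_id])
    (by rw [← extendEnd_comp, MulEquiv.coe_monoidHom_comp_coe_monoidHom_symm, extendEnd_id])
  map_one' := MulEquiv.toMonoidHom_injective extendEnd_id
  map_mul' f g := MulEquiv.toMonoidHom_injective
    (extendEnd_comp (f : FreeGroup α →* FreeGroup α) g)

variable {e}

lemma extendAut_of_notMem_range (f : MulAut (FreeGroup α)) {y : β} (hy : y ∉ range e) :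
    extendAut e f (of y) = of y :=
  extendEnd_of_notMem_range _ hy

lemma extendAut_map (f : MulAut (FreeGroup α)) (w : FreeGroup α) :
    extendAut e f (FreeGroup.map e w) = FreeGroup.map e (f w) :=
  extendEnd_map _ w

lemma extendAut_map_of_disjoint {γ : Type*} {e' : γ ↪ β} (h : Disjoint (range e) (range e'))
    (f : MulAut (FreeGroup α)) (w : FreeGroup γ) :
    extendAut e f (FreeGroup.map e' w) = FreeGroup.map e' w := by
  have hcomp : ((extendAut e f : FreeGroup β →* FreeGroup β).comp (FreeGroup.map e')) =
      FreeGroup.map e' := by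
    ext x
    rw [MonoidHom.comp_apply, FreeGroup.map.of]
    exact extendAut_of_notMem_range f (disjoint_right.1 h (mem_range_self x))
  exact DFunLike.congr_fun hcomp w

lemma commute_extendAut {γ : Type*} {e' : γ ↪ β} (h : Disjoint (range e) (range e'))
    (f : MulAut (FreeGroup α)) (g : MulAut (FreeGroup γ)) :
    Commute (extendAut e f) (extendAut e' g) := by
  refine freeGroupAut_ext fun y => ?_
  rw [MulAut.mul_apply, MulAut.mul_apply]
  by_cases hy : y ∈ range e
  · obtain ⟨x, rfl⟩ := hy
    rw [extendAut_of_notMem_range g (disjoint_left.1 h (mem_range_self x)), ← FreeGroup.map.of,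
      extendAut_map, extendAut_map_of_disjoint h.symm]
  rw [extendAut_of_notMem_range f hy]
  by_cases hy' : y ∈ range e'
  · obtain ⟨x, rfl⟩ := hy'
    rw [← FreeGroup.map.of, extendAut_map, extendAut_map_of_disjoint h]
  · rw [extendAut_of_notMem_range g hy', extendAut_of_notMem_range f hy]

end Extension

section Letters

variable [DecidableEq α] {a b c : α} {u w u' w' : FreeGroup α}

/-- The retraction of the free group deleting the letter `a` from all words. -/
def killLetter (a : α) : FreeGroup α →* FreeGroup α :=
  FreeGroup.lift (Function.update of a 1)

lemma killLetter_self (a : α) : killLetter a (of a) = 1 := by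
  rw [killLetter, FreeGroup.lift_apply_of, Function.update_self]

lemma killLetter_of_ne (h : b ≠ a) : killLetter a (of b) = of b := by
  rw [killLetter, FreeGroup.lift_apply_of, Function.update_of_ne h]

lemma comp_killLetter {f : FreeGroup α →* FreeGroup α} (ha : f (of a) = of a)
    (hf : ∀ x, x ≠ a → killLetter a (f (of x)) = f (of x)) (w : FreeGroup α) :
    f (killLetter a w) = killLetter a (f w) := by
  have h : f.comp (killLetter a) = (killLetter a).comp f := by
    ext x
    rw [MonoidHom.comp_apply, MonoidHom.comp_apply]
    rcases eq_or_ne x a with rfl | hx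
    · rw [ha, killLetter_self, map_one]
    · rw [killLetter_of_ne hx, hf x hx]
  exact DFunLike.congr_fun h w

/-- The endomorphism `x_a ↦ u x_a w` fixing the other letters, where the letter `a` is deleted
from `u` and `w`. -/
def mulLetterEnd (a : α) (u w : FreeGroup α) : FreeGroup α →* FreeGroup α :=
  FreeGroup.lift (Function.update of a (killLetter a u * of a * killLetter a w))

lemma mulLetterEnd_self : mulLetterEnd a u w (of a) = killLetter a u * of a * killLetter a w := by
  rw [mulLetterEnd, FreeGroup.lift_apply_of, Function.update_self]

lemma mulLetterEnd_of_ne (h : b ≠ a) : mulLetterEnd a u w (of b) = of b := by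
  rw [mulLetterEnd, FreeGroup.lift_apply_of, Function.update_of_ne h]

lemma mulLetterEnd_killLetter (z : FreeGroup α) :
    mulLetterEnd a u w (killLetter a z) = killLetter a z := by
  have h : (mulLetterEnd a u w).comp (killLetter a) = killLetter a := by
    ext x
    rw [MonoidHom.comp_apply]
    rcases eq_or_ne x a with rfl | hx
    · rw [killLetter_self, map_one]
    · rw [killLetter_of_ne hx, mulLetterEnd_of_ne hx]
  exact DFunLike.congr_fun h z

lemma mulLetterEnd_comp : (mulLetterEnd a u w).comp (mulLetterEnd a u' w') =
    mulLetterEnd a (u' * u) (w * w') := by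
  ext x
  rw [MonoidHom.comp_apply]
  rcases eq_or_ne x a with rfl | hx
  · simp only [mulLetterEnd_self, map_mul, mulLetterEnd_killLetter, mul_assoc]
  · simp only [mulLetterEnd_of_ne hx]

lemma mulLetterEnd_one : mulLetterEnd a 1 1 = MonoidHom.id _ := by
  ext x
  rcases eq_or_ne x a with rfl | hx
  · rw [mulLetterEnd_self, map_one, one_mul, mul_one, MonoidHom.id_apply]
  · rw [mulLetterEnd_of_ne hx, MonoidHom.id_apply]

/-- The automorphism `x_a ↦ u x_a w` fixing the other letters, where the letter `a` is deleted
from `u` and `w`. -/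
def mulLetter (a : α) (u w : FreeGroup α) : MulAut (FreeGroup α) :=
  MonoidHom.toMulEquiv (mulLetterEnd a u w) (mulLetterEnd a u⁻¹ w⁻¹)
    (by rw [mulLetterEnd_comp, mul_inv_cancel, inv_mul_cancel, mulLetterEnd_one])
    (by rw [mulLetterEnd_comp, inv_mul_cancel, mul_inv_cancel, mulLetterEnd_one])

lemma mulLetter_self : mulLetter a u w (of a) = killLetter a u * of a * killLetter a w :=
  mulLetterEnd_self

lemma mulLetter_of_ne (h : b ≠ a) : mulLetter a u w (of b) = of b :=
  mulLetterEnd_of_ne h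

lemma mulLetter_eq_self {z : FreeGroup α} (hz : killLetter a z = z) : mulLetter a u w z = z :=
  hz ▸ mulLetterEnd_killLetter z

lemma mulLetter_mul_mulLetter :
    mulLetter a u w * mulLetter a u' w' = mulLetter a (u' * u) (w * w') :=
  MulEquiv.toMonoidHom_injective mulLetterEnd_comp

lemma mulLetter_one : mulLetter a 1 1 = 1 :=
  MulEquiv.toMonoidHom_injective mulLetterEnd_one

lemma mulLetter_inv : (mulLetter a u w)⁻¹ = mulLetter a u⁻¹ w⁻¹ :=
  inv_eq_of_mul_eq_one_right (by
    rw [mulLetter_mul_mulLetter, inv_mul_cancel, mul_inv_cancel, mulLetter_one])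

lemma mulLetter_pow (n : ℕ) : mulLetter a u w ^ n = mulLetter a (u ^ n) (w ^ n) := by
  induction n with
  | zero => simp only [pow_zero, mulLetter_one]
  | succ n ih => rw [pow_succ, ih, mulLetter_mul_mulLetter, pow_succ' u, pow_succ w]

lemma mul_mulLetter {f : MulAut (FreeGroup α)} (ha : f (of a) = of a)
    (hf : ∀ x, x ≠ a → killLetter a (f (of x)) = f (of x)) (u w : FreeGroup α) :
    f * mulLetter a u w = mulLetter a (f u) (f w) * f := by
  have hkill := comp_killLetter (f := (f : FreeGroup α →* FreeGroup α)) ha hf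
  refine freeGroupAut_ext fun x => ?_
  rw [MulAut.mul_apply, MulAut.mul_apply]
  rcases eq_or_ne x a with rfl | hx
  · rw [mulLetter_self, ha, mulLetter_self, map_mul, map_mul, ha]
    exact congrArg₂ _ (congrArg (· * of x) (hkill u)) (hkill w)
  · rw [mulLetter_of_ne hx, mulLetter_eq_self (hf x hx)]

lemma killLetter_killLetter (hab : a ≠ b) (w : FreeGroup α) :
    killLetter a (killLetter b w) = killLetter b (killLetter a w) := by
  refine comp_killLetter (killLetter_of_ne hab.symm) (fun x hx => ?_) w
  rcases eq_or_ne x a with rfl | hxa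
  · rw [killLetter_self, map_one]
  · rw [killLetter_of_ne hxa, killLetter_of_ne hx]

lemma killLetter_mulLetter_of_ne (hab : a ≠ b) (hu : killLetter a u = u) (hw : killLetter a w = w)
    {x : α} (hx : x ≠ a) : killLetter a (mulLetter b u w (of x)) = mulLetter b u w (of x) := by
  rcases eq_or_ne x b with rfl | hxb
  · rw [mulLetter_self, map_mul, map_mul, killLetter_killLetter hab, killLetter_killLetter hab, hu,
      hw, killLetter_of_ne hx]
  · rw [mulLetter_of_ne hxb, killLetter_of_ne hx]

lemma killLetter_map [DecidableEq β] (e : α ↪ β) (w : FreeGroup α) :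
    killLetter (e a) (FreeGroup.map e w) = FreeGroup.map e (killLetter a w) := by
  have h : (killLetter (e a)).comp (FreeGroup.map e) = (FreeGroup.map e).comp (killLetter a) := by
    ext x
    rw [MonoidHom.comp_apply, MonoidHom.comp_apply, FreeGroup.map.of]
    rcases eq_or_ne x a with rfl | hx
    · rw [killLetter_self, killLetter_self, map_one]
    · rw [killLetter_of_ne hx, killLetter_of_ne (e.injective.ne hx), FreeGroup.map.of]
  exact DFunLike.congr_fun h w

lemma extendAut_mulLetter [DecidableEq β] (e : α ↪ β) :
    extendAut e (mulLetter a u w) =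
      mulLetter (e a) (FreeGroup.map e u) (FreeGroup.map e w) := by
  refine freeGroupAut_ext fun y => ?_
  by_cases hy : y ∈ range e
  · obtain ⟨x, rfl⟩ := hy
    rw [← FreeGroup.map.of, extendAut_map]
    rcases eq_or_ne x a with rfl | hx
    · rw [mulLetter_self, FreeGroup.map.of, mulLetter_self, killLetter_map, killLetter_map, map_mul,
        map_mul, FreeGroup.map.of]
    · rw [mulLetter_of_ne hx, FreeGroup.map.of, mulLetter_of_ne (e.injective.ne hx)]
  · rw [extendAut_of_notMem_range _ hy, mulLetter_of_ne (fun h => hy ⟨a, h.symm⟩)]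

variable (a) in
/-- The homomorphism sending `w` to the automorphism `x_a ↦ w⁻¹ x_a w`. -/
def conjLetter : FreeGroup α →* MulAut (FreeGroup α) where
  toFun w := mulLetter a w⁻¹ w
  map_one' := by rw [inv_one, mulLetter_one]
  map_mul' u v := by rw [mulLetter_mul_mulLetter, mul_inv_rev]

variable (a) in
/-- The homomorphism sending `w` to the automorphism `x_a ↦ x_a w`. -/
def rightMulLetter : FreeGroup α →* MulAut (FreeGroup α) where
  toFun w := mulLetter a 1 w
  map_one' := mulLetter_one
  map_mul' u v := by rw [mulLetter_mul_mulLetter, mul_one]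

lemma conjLetter_apply : conjLetter a w = mulLetter a w⁻¹ w := rfl

lemma rightMulLetter_apply : rightMulLetter a w = mulLetter a 1 w := rfl

end Letters

end LetterAutomorphisms

section FreeGroupTransvections

open FreeGroup (of)

variable {α : Type*} [DecidableEq α] {a b c d : α} {w : FreeGroup α}

lemma rightMulLetter_of_ne (h : b ≠ a) : rightMulLetter a w (of b) = of b :=
  mulLetter_of_ne h

lemma rightMulLetter_self (hw : killLetter a w = w) :
    rightMulLetter a w (of a) = of a * w := by
  rw [rightMulLetter_apply, mulLetter_self, map_one, one_mul, hw]

lemma rightMulLetter_mul_rightMulLetter (hab : a ≠ b) (hw : killLetter a w = w)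
    (z : FreeGroup α) : rightMulLetter b w * rightMulLetter a z =
      rightMulLetter a (rightMulLetter b w z) * rightMulLetter b w := by
  have h := mul_mulLetter (mulLetter_of_ne hab)
    (fun x => killLetter_mulLetter_of_ne (u := 1) hab (map_one _) hw) 1 z
  rwa [map_one] at h

lemma rightMulLetter_mul_conjLetter (hab : a ≠ b) (hw : killLetter a w = w) (z : FreeGroup α) :
    rightMulLetter b w * conjLetter a z =
      conjLetter a (rightMulLetter b w z) * rightMulLetter b w := by
  have h := mul_mulLetter (mulLetter_of_ne hab)
    (fun x => killLetter_mulLetter_of_ne (u := 1) hab (map_one _) hw) z⁻¹ z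
  rwa [map_inv] at h

lemma conjLetter_of_ne (h : b ≠ a) : conjLetter a w (of b) = of b :=
  mulLetter_of_ne h

lemma conjLetter_self (hw : killLetter a w = w) :
    conjLetter a w (of a) = w⁻¹ * of a * w := by
  rw [conjLetter_apply, mulLetter_self, map_inv, hw]

lemma conjLetter_mul_conjLetter (hab : a ≠ b) (hw : killLetter a w = w) (z : FreeGroup α) :
    conjLetter b w * conjLetter a z = conjLetter a (conjLetter b w z) * conjLetter b w := by
  have h := mul_mulLetter (mulLetter_of_ne hab)
    (fun x => killLetter_mulLetter_of_ne hab (by rw [map_inv, hw]) hw) z⁻¹ z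
  rwa [map_inv] at h

lemma conjLetter_mul_rightMulLetter_pow (u v : FreeGroup α) (N : ℕ) :
    (conjLetter a u * rightMulLetter a v) ^ N * (conjLetter a u ^ N)⁻¹ =
      rightMulLetter a ((u * v) ^ N * (u ^ N)⁻¹) := by
  simp only [conjLetter_apply, rightMulLetter_apply, mulLetter_mul_mulLetter, mulLetter_pow,
    mulLetter_inv]
  simp

lemma rightMulLetter_mul_conjLetter_pow (u v : FreeGroup α) (N : ℕ) :
    (rightMulLetter a v * conjLetter a u) ^ N * (conjLetter a u ^ N)⁻¹ =
      rightMulLetter a ((v * u) ^ N * (u ^ N)⁻¹) := by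
  simp only [conjLetter_apply, rightMulLetter_apply, mulLetter_mul_mulLetter, mulLetter_pow,
    mulLetter_inv]
  simp

lemma commutator_conjLetter_rightMulLetter (u v : FreeGroup α) :
    ⁅conjLetter a u, rightMulLetter a v⁆ = rightMulLetter a ⁅u, v⁆ := by
  simp only [conjLetter_apply, rightMulLetter_apply, commutatorElement_def, mulLetter_mul_mulLetter,
    mulLetter_inv]
  simp

variable (a b c)

/-- The partial conjugation `x_a ↦ x_b⁻¹ x_a x_b`. -/
def partialConj : MulAut (FreeGroup α) := conjLetter a (of b)

/-- The power `x_a ↦ x_a x_b ^ N` of a transvection. -/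
def powTransvection (N : ℕ) : MulAut (FreeGroup α) := rightMulLetter a (of b ^ N)

/-- The commutator transvection `x_a ↦ x_a ⁅⁅x_b, x_c⁆, x_b⁆`. -/
def commutatorTransvection : MulAut (FreeGroup α) := rightMulLetter a ⁅⁅of b, of c⁆, of b⁆

variable {a b c}

lemma commutatorExpansion_conjLetter (a : α) (u v w : FreeGroup α) :
    commutatorExpansion (conjLetter a u) (conjLetter a v) (rightMulLetter a w) =
      rightMulLetter a (commutatorExpansion u v w) := by
  simp only [commutatorExpansion, conjLetter_apply, rightMulLetter_apply, commutatorElement_def,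
    mulLetter_mul_mulLetter, mulLetter_inv]
  congr 1
  group

lemma rightMulLetter_mul_commutatorTransvection (h : [a, b, c].Nodup) (ha : killLetter a w = w)
    (hc : killLetter c w = w) :
    rightMulLetter c w * commutatorTransvection a b c =
      commutatorExpansion (partialConj a b) (partialConj a c) (rightMulLetter a w) *
        commutatorTransvection a b c * rightMulLetter c w := by
  rw [commutatorTransvection, rightMulLetter_mul_rightMulLetter (by grind) ha, partialConj,
    partialConj, commutatorExpansion_conjLetter, ← map_mul, ← commutator_mul_right_commutator,
    map_commutatorElement (rightMulLetter c w), map_commutatorElement (rightMulLetter c w),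
    rightMulLetter_of_ne (by grind), rightMulLetter_self hc]

lemma killLetter_of_pow (h : b ≠ a) (N : ℕ) : killLetter a (of b ^ N) = of b ^ N := by
  rw [map_pow, killLetter_of_ne h]

lemma killLetter_commutator (hb : b ≠ a) (hc : c ≠ a) :
    killLetter a ⁅⁅of b, of c⁆, of b⁆ = ⁅⁅of b, of c⁆, of b⁆ := by
  simp only [map_commutatorElement, killLetter_of_ne hb, killLetter_of_ne hc]

lemma partialConj_self (a : α) : partialConj a a = 1 :=
  freeGroupAut_ext fun x => by
    rw [partialConj, conjLetter_apply]
    rcases eq_or_ne x a with rfl | hx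
    · rw [mulLetter_self, map_inv, killLetter_self, inv_one, one_mul, mul_one, MulAut.one_apply]
    · rw [mulLetter_of_ne hx, MulAut.one_apply]

lemma rightMulLetter_eq_one (hw : killLetter a w = 1) : rightMulLetter a w = 1 :=
  freeGroupAut_ext fun x => by
    rcases eq_or_ne x a with rfl | hx
    · rw [rightMulLetter_apply, mulLetter_self, map_one, one_mul, hw, mul_one, MulAut.one_apply]
    · rw [rightMulLetter_of_ne hx, MulAut.one_apply]

lemma powTransvection_self (a : α) (N : ℕ) : powTransvection a a N = 1 :=
  rightMulLetter_eq_one (by rw [map_pow, killLetter_self, one_pow])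

lemma commutatorTransvection_eq_one (h : ¬[a, b, c].Nodup) : commutatorTransvection a b c = 1 := by
  refine rightMulLetter_eq_one ?_
  rw [map_commutatorElement, map_commutatorElement]
  rcases (by grind : a = b ∨ a = c ∨ b = c) with rfl | rfl | rfl
  · rw [killLetter_self, commutatorElement_one_right]
  · rw [killLetter_self, commutatorElement_one_right, commutatorElement_one_left]
  · rw [commutatorElement_self, commutatorElement_one_left]

lemma commute_partialConj (hab : a ≠ b) (hcb : c ≠ b) (hda : d ≠ a) :
    Commute (partialConj a c) (partialConj b d) := by
  rw [Commute, SemiconjBy, partialConj, partialConj,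
    conjLetter_mul_conjLetter hab.symm (killLetter_of_ne hcb), conjLetter_of_ne hda]

lemma commute_partialConj_mul_partialConj (h : [a, b, c].Nodup) :
    Commute (partialConj a b) (partialConj b c * partialConj a c) := by
  have hconj := conjLetter_mul_conjLetter (a := a) (b := b) (w := of c) (by grind)
    (killLetter_of_ne (by grind)) (of c * of b)
  rw [map_mul (conjLetter b _), conjLetter_of_ne (by grind),
    conjLetter_self (killLetter_of_ne (by grind)), mul_assoc (of c)⁻¹, mul_inv_cancel_left, map_mul,
    map_mul] at hconj
  calc partialConj a b * (partialConj b c * partialConj a c)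
      = partialConj a b * partialConj a c * partialConj b c := by
        rw [(commute_partialConj (by grind) (by grind) (by grind) :
          Commute (partialConj b c) (partialConj a c)).eq, mul_assoc]
    _ = partialConj b c * partialConj a c * partialConj a b := by
        rw [mul_assoc (partialConj b c)]
        exact hconj.symm

lemma powTransvection_mul_partialConj (h : [a, b, c].Nodup) (N : ℕ) :
    powTransvection b c N * partialConj a b =
      partialConj a b * partialConj a c ^ N * powTransvection b c N := by
  rw [powTransvection, partialConj, rightMulLetter_mul_conjLetter (by grind)
    (killLetter_of_pow (by grind) N), rightMulLetter_self (killLetter_of_pow (by grind) N), map_mul,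
    map_pow, partialConj]

lemma powTransvection_mul_powTransvection (h : [a, b, c].Nodup) (N : ℕ) :
    powTransvection b c N * powTransvection a b N =
      (partialConj a b * powTransvection a c N) ^ N * (partialConj a b ^ N)⁻¹ *
        powTransvection a b N * powTransvection b c N := by
  rw [powTransvection, powTransvection, rightMulLetter_mul_rightMulLetter (by grind)
    (killLetter_of_pow (by grind) N), map_pow, rightMulLetter_self (killLetter_of_pow (by grind) N),
    partialConj, powTransvection, conjLetter_mul_rightMulLetter_pow, ← map_mul,
    inv_mul_cancel_right]

lemma commutator_partialConj_powTransvection (a b c : α) (N : ℕ) :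
    ⁅⁅partialConj a b, partialConj a c⁆, powTransvection a b N⁆ =
      (commutatorTransvection a b c * partialConj a b) ^ N * (partialConj a b ^ N)⁻¹ := by
  have hpow : ⁅⁅of b, of c⁆, of b ^ N⁆ = (⁅⁅of b, of c⁆, of b⁆ * of b) ^ N * (of b ^ N)⁻¹ := by
    rw [commutatorElement_def ⁅of b, of c⁆ (of b), inv_mul_cancel_right, conj_pow,
      ← commutatorElement_def]
  rw [partialConj, partialConj, powTransvection, commutatorTransvection, ← map_commutatorElement,
    commutator_conjLetter_rightMulLetter, hpow, rightMulLetter_mul_conjLetter_pow]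

lemma commutatorTransvection_mul_partialConj (h : [a, b, c, d].Nodup) :
    commutatorTransvection b c d * partialConj a b =
      partialConj a b * ⁅⁅partialConj a c, partialConj a d⁆, partialConj a c⁆ *
        commutatorTransvection b c d := by
  rw [commutatorTransvection, partialConj, rightMulLetter_mul_conjLetter (by grind)
    (killLetter_commutator (by grind) (by grind)),
    rightMulLetter_self (killLetter_commutator (by grind) (by grind)), map_mul,
    map_commutatorElement, map_commutatorElement, partialConj, partialConj]

lemma partialConj_mul_partialConj_eq_conj (h : [a, b, c].Nodup)
    (hcover : ∀ x, x = a ∨ x = b ∨ x = c) :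
    partialConj b a * partialConj c a = MulAut.conj (of a)⁻¹ := by
  have hb : killLetter b (of a) = of a := killLetter_of_ne (by grind)
  have hc : killLetter c (of a) = of a := killLetter_of_ne (by grind)
  refine freeGroupAut_ext fun x => ?_
  rw [partialConj, partialConj, MulAut.mul_apply, MulAut.conj_apply, inv_inv]
  rcases hcover x with rfl | rfl | rfl
  · rw [conjLetter_of_ne (by grind), conjLetter_of_ne (by grind), inv_mul_cancel, one_mul]
  · rw [conjLetter_of_ne (by grind), conjLetter_self hb]
  · rw [conjLetter_self hc, map_mul, map_mul, map_inv, conjLetter_of_ne (by grind),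
      conjLetter_of_ne (by grind)]

lemma commutatorTransvection_mul_conj (h : [a, b, c].Nodup)
    (hcover : ∀ x, x = a ∨ x = b ∨ x = c) :
    commutatorTransvection c a b * (partialConj a c * partialConj b c) =
      ⁅(partialConj b a * partialConj c a)⁻¹,
        ⁅(partialConj a b * partialConj c b)⁻¹, (partialConj b a * partialConj c a)⁻¹⁆⁻¹⁆ *
        (partialConj a c * partialConj b c) * commutatorTransvection c a b := by
  rw [partialConj_mul_partialConj_eq_conj h hcover,
    partialConj_mul_partialConj_eq_conj (a := b) (by grind) (fun x => or_left_comm.1 (hcover x)),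
    partialConj_mul_partialConj_eq_conj (a := c) (by grind) (fun x => or_rotate.2 (hcover x)),
    mulAut_mul_conj, commutatorTransvection, map_inv (rightMulLetter c _),
    rightMulLetter_self (killLetter_commutator (by grind) (by grind))]
  simp only [← map_inv, inv_inv, ← map_commutatorElement, ← map_mul, commutatorElement_inv,
    mul_inv_rev]

lemma extendAut_partialConj {β : Type*} [DecidableEq β] (e : β ↪ α) (i j : β) :
    extendAut e (partialConj i j) = partialConj (e i) (e j) := by
  rw [partialConj, conjLetter_apply, extendAut_mulLetter, map_inv, FreeGroup.map.of, partialConj,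
    conjLetter_apply]

lemma extendAut_powTransvection {β : Type*} [DecidableEq β] (e : β ↪ α) (i j : β) (N : ℕ) :
    extendAut e (powTransvection i j N) = powTransvection (e i) (e j) N := by
  rw [powTransvection, rightMulLetter_apply, extendAut_mulLetter, map_one, map_pow,
    FreeGroup.map.of, powTransvection, rightMulLetter_apply]

lemma extendAut_commutatorTransvection {β : Type*} [DecidableEq β] (e : β ↪ α) (i j k : β) :
    extendAut e (commutatorTransvection i j k) = commutatorTransvection (e i) (e j) (e k) := by
  rw [commutatorTransvection, rightMulLetter_apply, extendAut_mulLetter, map_one,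
    map_commutatorElement, map_commutatorElement, FreeGroup.map.of, FreeGroup.map.of,
    commutatorTransvection, rightMulLetter_apply]

lemma commutatorTransvection_mul_partialConj_mul_partialConj (h : [a, b, c].Nodup) :
    commutatorTransvection c a b * (partialConj a c * partialConj b c) =
      ⁅(partialConj b a * partialConj c a)⁻¹,
        ⁅(partialConj a b * partialConj c b)⁻¹, (partialConj b a * partialConj c a)⁻¹⁆⁻¹⁆ *
        (partialConj a c * partialConj b c) * commutatorTransvection c a b := by
  let e : Fin 3 ↪ α := ⟨[a, b, c].get, List.nodup_iff_injective_get.1 h⟩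
  have hrank_three := congrArg (extendAut e) (commutatorTransvection_mul_conj (a := (0 : Fin 3))
    (b := 1) (c := 2) (by decide) (by decide))
  simp only [map_mul, map_inv, map_commutatorElement, extendAut_partialConj,
    extendAut_commutatorTransvection] at hrank_three
  exact hrank_three

theorem isTransvectionFamily (N : ℕ) : IsTransvectionFamily N (partialConj (α := α))
    (fun a b => powTransvection a b N) commutatorTransvection where
  K_self := partialConj_self
  R_self a := powTransvection_self a N
  M_eq_one := commutatorTransvection_eq_one
  commute_K_K_target h := commute_partialConj (by grind) (by grind) (by grind)
  commute_K_K_disjoint h := commute_partialConj (by grind) (by grind) (by grind)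
  commute_K_K_mul_K := commute_partialConj_mul_partialConj
  R_mul_K h := powTransvection_mul_partialConj h N
  R_mul_R h := powTransvection_mul_powTransvection h N
  R_mul_M h := rightMulLetter_mul_commutatorTransvection (by grind)
    (killLetter_of_pow (by grind) N) (killLetter_of_pow (by grind) N)
  M_mul_M h := rightMulLetter_mul_commutatorTransvection (by grind)
    (killLetter_commutator (by grind) (by grind)) (killLetter_commutator (by grind) (by grind))
  commutator_R _ := commutator_partialConj_powTransvection _ _ _ N
  M_mul_K := commutatorTransvection_mul_partialConj
  M_mul_K_mul_K := commutatorTransvection_mul_partialConj_mul_partialConj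

end FreeGroupTransvections

/-! ### Actions of subgroups of `Aut(F_k)` and `Out(F_n)` -/

section TransvectionActions

variable {ι H : Type*} [Group H] [Fintype ι] {N : ℕ} {K R : ι → ι → H} {M : ι → ι → ι → H}

/- On the subgroup generated by the family the character `θ` has finite order. Its kernel there is
finitely generated without real characters, so Thurston stability applies to it. -/
theorem IsTransvectionFamily.map_R_eq_one (hr : IsTransvectionFamily N K R M)
    (hcard : 4 ≤ Fintype.card ι) (hN : N ≠ 0) {θ : H →* ℂˣ} (hR : ∀ a b, θ (R a b) = 1)
    (hM : ∀ a b c, θ (M a b c) = 1) {ρ : H →* Equiv.Perm 𝕊} {x : ℝ}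
    (hlift : ∀ g, θ g = 1 → ∃ F ∈ contDiffLifts, circlePerm F = ρ g ∧ F x = x) (a b : ι) :
    ρ (R a b) = 1 := by
  obtain ⟨L, K', R', M', hr', hgen, hR', hM'⟩ := hr.exists_generating_subgroup
  have hfg : Group.FG L := Group.fg_iff.2 ⟨_, hgen, finite_transvections K' R' M'⟩
  let χ : L →* ℂˣ := θ.comp L.subtype
  have hχR (a b : ι) : χ (R' a b) = 1 := (congrArg θ (hR' a b)).trans (hR a b)
  have hχM (a b c : ι) : χ (M' a b c) = 1 := (congrArg θ (hM' a b c)).trans (hM a b c)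
  have hχ_pow : ∀ g, χ g ^ N = 1 := hr'.character_pow_eq_one (by omega) hgen hχM
  have : Finite χ.range := finite_range_of_pow_eq_one hN hχ_pow
  have hchar : HasTrivialRealCharacters χ.ker := hasTrivialRealCharacters_ker hN hχ_pow
    fun j c hc => hr'.isTwistedCoboundary hcard hN hc
      (fun a b => by rw [MonoidHom.pow_apply, hχR, one_pow])
      (fun a b d => by rw [MonoidHom.pow_apply, hχM, one_pow]) hgen
  have hker := eq_one_of_fixing_lifts (ρ := ρ.comp (L.subtype.comp χ.ker.subtype)) hchar
    (fun g => hlift _ g.2) ⟨R' a b, hχR a b⟩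
  rwa [MonoidHom.comp_apply, MonoidHom.comp_apply, Subgroup.subtype_apply, Subgroup.subtype_apply,
    hR'] at hker

end TransvectionActions

section IAGroup

open FreeGroup (of)

variable {k n : ℕ}

lemma mem_IA_iff {f : AutF n} :
    f ∈ IA n ↔ ∀ i, Abelianization.of (f (of i)) = Abelianization.of (of i) := by
  refine ⟨fun hf i => hf (of i), fun hf => DFunLike.congr_fun (f := Abelianization.of.comp
    (f : FreeGrp n →* FreeGrp n)) (FreeGroup.ext_hom _ _ hf)⟩

lemma conjLetter_mem_IA (a : Fin n) (w : FreeGrp n) : conjLetter a w ∈ IA n := by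
  refine mem_IA_iff.2 fun i => ?_
  rw [conjLetter_apply]
  rcases eq_or_ne i a with rfl | hi
  · rw [mulLetter_self, map_mul, map_mul, map_inv, map_inv, inv_mul_cancel_comm]
  · rw [mulLetter_of_ne hi]

lemma rightMulLetter_commutator_mem_IA (a : Fin n) (u v : FreeGrp n) :
    rightMulLetter a ⁅u, v⁆ ∈ IA n := by
  refine mem_IA_iff.2 fun i => ?_
  rw [rightMulLetter_apply]
  rcases eq_or_ne i a with rfl | hi
  · rw [mulLetter_self, map_one, one_mul, map_mul, map_commutatorElement, map_commutatorElement,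
      commutatorElement_eq_one_iff_commute.2 (Commute.all _ _), mul_one]
  · rw [mulLetter_of_ne hi]

lemma extendAut_mem_IA {e : Fin k ↪ Fin n} {f : AutF k} (hf : f ∈ IA k) : extendAut e f ∈ IA n := by
  refine mem_IA_iff.2 fun i => ?_
  by_cases hi : i ∈ range e
  · obtain ⟨j, rfl⟩ := hi
    rw [← FreeGroup.map.of, extendAut_map, ← Abelianization.map_of, hf, Abelianization.map_of]
  · rw [extendAut_of_notMem_range f hi]

lemma powTransvection_notMem_InnF {a b : Fin n} (hab : a ≠ b) {N : ℕ} (hN : N ≠ 0) :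
    powTransvection a b N ∉ InnF n := by
  rintro ⟨g, hg⟩
  let exponentOf_b : FreeGrp n →* Multiplicative ℤ :=
    FreeGroup.lift (Pi.mulSingle b (Multiplicative.ofAdd 1))
  have hb : exponentOf_b (of b) = Multiplicative.ofAdd 1 := by
    rw [FreeGroup.lift_apply_of, Pi.mulSingle_eq_same]
  have h := congrArg exponentOf_b (DFunLike.congr_fun hg (of a))
  rw [powTransvection, rightMulLetter_self (killLetter_of_pow hab.symm N), MulAut.conj_apply,
    map_mul, map_mul, map_inv, mul_inv_cancel_comm, map_mul, map_pow, hb, left_eq_mul,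
    ← ofAdd_nsmul, ofAdd_eq_one, nsmul_one, Nat.cast_eq_zero] at h
  exact hN h

lemma character_commutatorTransvection_eq_one {Γ : Subgroup (AutF k)} (hIA : IA k ≤ Γ)
    (θ : Γ →* ℂˣ) {a b c : Fin k} (h : commutatorTransvection a b c ∈ Γ) :
    θ ⟨commutatorTransvection a b c, h⟩ = 1 := by
  let p : Γ := ⟨partialConj a b, hIA (conjLetter_mem_IA a _)⟩
  let q : Γ := ⟨rightMulLetter a ⁅of b, of c⁆, hIA (rightMulLetter_commutator_mem_IA a _ _)⟩
  have hpq : (⟨commutatorTransvection a b c, h⟩ : Γ) = ⁅p, q⁆⁻¹ := by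
    refine Subtype.ext ?_
    change commutatorTransvection a b c = ⁅conjLetter a (of b), rightMulLetter a ⁅of b, of c⁆⁆⁻¹
    rw [commutator_conjLetter_rightMulLetter, ← map_inv, commutatorElement_inv,
      commutatorTransvection]
  rw [hpq, map_inv, character_commutator, inv_one]

lemma powTransvection_mul (a b : Fin k) (m N : ℕ) :
    powTransvection a b (m * N) = powTransvection a b m ^ N := by
  rw [powTransvection, powTransvection, ← map_pow, ← pow_mul]

theorem exists_powTransvection_map_eq_one (hk : 4 ≤ k) {Γ : Subgroup (AutF k)} [Γ.FiniteIndex]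
    (hIA : IA k ≤ Γ) {ρ : Γ →* Equiv.Perm 𝕊} (hρ : ∀ g, IsC1Diffeo (ρ g)) {x : ℝ}
    (hx : IsSharedFixedPoint (liftGroup ρ.range) x) (a b : Fin k) :
    ∃ N ≠ 0, ∃ h : powTransvection a b N ∈ Γ, ρ ⟨powTransvection a b N, h⟩ = 1 := by
  obtain ⟨θ, hθ⟩ := exists_character_of_isSharedFixedPoint hρ hx
  let m := Γ.index.factorial
  have hm : m ≠ 0 := Γ.index.factorial_ne_zero
  have hK (a b : Fin k) : partialConj a b ∈ Γ := hIA (conjLetter_mem_IA a _)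
  have hM (a b c : Fin k) : commutatorTransvection a b c ∈ Γ :=
    hIA (rightMulLetter_commutator_mem_IA a _ _)
  have hR (a b : Fin k) : powTransvection a b m ∈ Γ := by
    rw [← one_mul m, powTransvection_mul]
    exact Γ.pow_mem_of_index_ne_zero_of_dvd Γ.index_ne_zero_of_finite _
      fun _ hpos hle => Nat.dvd_factorial hpos hle
  have hR' (a b : Fin k) : powTransvection a b (m * m) ∈ Γ := by
    rw [powTransvection_mul]
    exact pow_mem (hR a b) m
  have hfamily (N : ℕ) (hR : ∀ a b, powTransvection a b N ∈ Γ) :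
      IsTransvectionFamily N (fun a b => (⟨_, hK a b⟩ : Γ)) (fun a b => ⟨_, hR a b⟩)
        fun a b c => ⟨_, hM a b c⟩ :=
    .of_map_injective Γ.subtype_injective (isTransvectionFamily N)
  have hcard : 4 ≤ Fintype.card (Fin k) := by rwa [Fintype.card_fin]
  refine ⟨m * m, mul_ne_zero hm hm, hR' a b, ?_⟩
  refine (hfamily _ hR').map_R_eq_one hcard (mul_ne_zero hm hm) (θ := θ) (fun a b => ?_)
    (fun a b c => character_commutatorTransvection_eq_one hIA θ _) hθ a b
  have hpow : (⟨_, hR' a b⟩ : Γ) = ⟨_, hR a b⟩ ^ m :=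
    Subtype.ext (powTransvection_mul a b m m)
  rw [hpow, map_pow]
  exact (hfamily m hR).character_R_pow_eq_one (by omega) θ a b

end IAGroup

section OuterActions

variable {k n : ℕ}

/-- The homomorphism `Aut(F_k) → Out(F_n)` given by the inclusion `e` of letters. -/
def toOutF (e : Fin k ↪ Fin n) : AutF k →* OutF n :=
  (QuotientGroup.mk' (InnF n)).comp (extendAut e)

variable {Γ : Subgroup (OutF n)} {ρ : Γ →* Equiv.Perm 𝕊}

/-- The action of the preimage of `Γ` in `Aut(F_k)` obtained by restricting an action of `Γ`. -/
def blockAction (ρ : Γ →* Equiv.Perm 𝕊) (e : Fin k ↪ Fin n) :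
    Γ.comap (toOutF e) →* Equiv.Perm 𝕊 :=
  ρ.comp ((toOutF e).subgroupComap Γ)

lemma commute_of_mem_range_blockAction {e e' : Fin k ↪ Fin n} (h : Disjoint (range e) (range e')) :
    ∀ f ∈ (blockAction ρ e).range, ∀ g ∈ (blockAction ρ e').range, Commute f g := by
  rintro _ ⟨f, rfl⟩ _ ⟨g, rfl⟩
  refine Commute.map (Subtype.ext ?_) ρ
  exact (commute_extendAut h f.1 g.1).map (QuotientGroup.mk' (InnF n))

lemma not_isSharedFixedPoint_blockAction (hk : 4 ≤ k) [Γ.FiniteIndex] (hT : Torelli n ≤ Γ)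
    (hρ : ∀ g, IsC1Diffeo (ρ g)) (hinj : Function.Injective ρ) (e : Fin k ↪ Fin n) (x : ℝ) :
    ¬ IsSharedFixedPoint (liftGroup (blockAction ρ e).range) x := by
  intro hx
  have : (Γ.comap (toOutF e)).FiniteIndex :=
    ⟨by rw [Subgroup.index_comap]; exact (Γ.subgroupOf _).index_ne_zero_of_finite⟩
  have hIA : IA k ≤ Γ.comap (toOutF e) := fun f hf =>
    hT (Subgroup.mem_map_of_mem _ (extendAut_mem_IA hf))
  let a : Fin k := ⟨0, by omega⟩
  let b : Fin k := ⟨1, by omega⟩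
  obtain ⟨N, hN, hmem, hone⟩ :=
    exists_powTransvection_map_eq_one hk hIA (fun g => hρ _) hx a b
  have hout : toOutF e (powTransvection a b N) = 1 :=
    congrArg Subtype.val (hinj (hone.trans ρ.map_one.symm))
  refine powTransvection_notMem_InnF (a := e a) (b := e b) (e.injective.ne (by simp [a, b])) hN ?_
  rw [← extendAut_powTransvection]
  exact (QuotientGroup.eq_one_iff _).1 hout

lemma exists_disjoint_embeddings {m k n : ℕ} (h : m + k ≤ n) :
    ∃ (e : Fin m ↪ Fin n) (e' : Fin k ↪ Fin n), Disjoint (range e) (range e') := by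
  refine ⟨(Fin.castAddEmb k).trans (Fin.castLEEmb h), (Fin.natAddEmb m).trans (Fin.castLEEmb h), ?_⟩
  rw [Set.disjoint_left]
  rintro _ ⟨i, rfl⟩ ⟨j, hj⟩
  have hval : m + j = i := congrArg Fin.val hj
  omega

end OuterActions

/-- For `n ≥ 8`, if `Γ` is a finite index subgroup of `Out(Fₙ)`
containing the Torelli group `𝒯ₙ`, then any orientation preserving `C¹` action of `Γ`
on the circle cannot be faithful. -/
theorem out_finite_index_torelli_action_not_faithful
    (n : ℕ) (hn : 8 ≤ n)
    (Γ : Subgroup (OutF n)) [Γ.FiniteIndex] (hT : Torelli n ≤ Γ)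
    (ρ : Γ →* Equiv.Perm 𝕊) (hρ : ∀ g : Γ, IsC1Diffeo (ρ g)) :
    ¬ Function.Injective ρ := by
  intro hinj
  obtain ⟨e, e', hdisj⟩ := exists_disjoint_embeddings (m := 4) (k := 4) hn
  rcases exists_isSharedFixedPoint_liftGroup_of_commute
    (commute_of_mem_range_blockAction (ρ := ρ) hdisj) with ⟨x, hx⟩ | ⟨x, hx⟩
  · exact not_isSharedFixedPoint_blockAction le_rfl hT hρ hinj e x hx
  · exact not_isSharedFixedPoint_blockAction le_rfl hT hρ hinj e' x hx
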